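/- (Potential energy decay along a sequence of times) Let λ = 1, a > -1/4, 0 < b < 1, and let u be a smooth Schwartz solution of (INLS) with sup_{t∈ℝ} ‖u(t)‖_{H¹(ℝ³)} ≤ E for some E > 0. Then there exist a sequence of times t_n → ∞ and a sequence of radii R_n → ∞ such that lim_{n→∞} ∫_{|x| ≤ R_n} |u(t_n,x)|⁴/|x|^b dx = 0. -/

import Mathlib

open MeasureTheory Real Filter
open scoped BigOperators Topology

noncomputable section

/-- Three-dimensional Euclidean space. -/
abbrev E3 : Type := EuclideanSpace ℝ (Fin 3)

/-- The `j`-th standard basis vector of `E3`. -/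
def e3 (j : Fin 3) : E3 := EuclideanSpace.single j 1

/-- The `j`-th spatial partial derivative of a complex-valued function. -/
def pd (j : Fin 3) (f : E3 → ℂ) (x : E3) : ℂ := fderiv ℝ f x (e3 j)

/-- The `j`-th spatial partial derivative of a real-valued function. -/
def pdR (j : Fin 3) (w : E3 → ℝ) (x : E3) : ℝ := fderiv ℝ w x (e3 j)

/-- The Laplacian of a complex-valued function on `E3`. -/
def lap (f : E3 → ℂ) (x : E3) : ℂ := ∑ j : Fin 3, pd j (fun y => pd j f y) x

/-- The Laplacian of a real-valued function on `E3`. -/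
def lapR (w : E3 → ℝ) (x : E3) : ℝ := ∑ j : Fin 3, pdR j (fun y => pdR j w y) x

/-- Second partial derivatives `∂_j ∂_k w` of a real-valued function on `E3`. -/
def pdR2 (j k : Fin 3) (w : E3 → ℝ) (x : E3) : ℝ := pdR j (fun y => pdR k w y) x

/-- A smooth Schwartz solution of the inhomogeneous cubic NLS with inverse-square
potential: `i ∂ₜ u + Δu − (a/|x|²) u = λ |x|^{−b} |u|² u` on `ℝ × (ℝ³ \ {0})`,
with `u(t,·)` Schwartz for each time, and Schwartz seminorms of `u(t,·)`
and `∂ₜ u(t,·)` locally uniformly bounded in `t`. -/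
structure IsSchwartzSolution (a b lam : ℝ) (u : ℝ → E3 → ℂ) : Prop where
  smooth : ContDiff ℝ (⊤ : ℕ∞) (Function.uncurry u)
  schwartz : ∀ t : ℝ, ∃ f : SchwartzMap E3 ℂ, ∀ x : E3, f x = u t x
  schwartz_dt : ∀ t : ℝ, ∃ f : SchwartzMap E3 ℂ, ∀ x : E3,
      f x = deriv (fun s => u s x) t
  unif_bound : ∀ (k n : ℕ) (T : ℝ), 0 < T → ∃ C : ℝ, ∀ t ∈ Set.Icc (-T) T, ∀ x : E3,
      ‖x‖ ^ k * ‖iteratedFDeriv ℝ n (u t) x‖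
        + ‖x‖ ^ k * ‖iteratedFDeriv ℝ n (fun y => deriv (fun s => u s y) t) x‖ ≤ C
  eqn : ∀ (t : ℝ) (x : E3), x ≠ 0 →
      Complex.I * deriv (fun s => u s x) t + lap (u t) x
          - ((a / ‖x‖ ^ 2 : ℝ) : ℂ) * u t x
        = (lam : ℂ) * ((‖x‖ ^ (-b) : ℝ) : ℂ) * ((‖u t x‖ ^ 2 : ℝ) : ℂ) * u t x

/-! ### Calculus of `pdR` -/

/-- `w` is differentiable at `x` with `j`-th partial derivative `d`. -/
def HP (j : Fin 3) (w : E3 → ℝ) (d : ℝ) (x : E3) : Prop :=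
  DifferentiableAt ℝ w x ∧ pdR j w x = d

lemma HP.of_diff {j : Fin 3} {w : E3 → ℝ} {x : E3} (h : DifferentiableAt ℝ w x) :
    HP j w (pdR j w x) x := ⟨h, rfl⟩

lemma HP.of_has {j : Fin 3} {w : E3 → ℝ} {x : E3} {L : E3 →L[ℝ] ℝ} (h : HasFDerivAt w L x) :
    HP j w (L (e3 j)) x := ⟨h.differentiableAt, by rw [pdR, h.fderiv]⟩

lemma HP.mul {j : Fin 3} {v w : E3 → ℝ} {c d : ℝ} {x : E3} (hv : HP j v c x) (hw : HP j w d x) :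
    HP j (fun y => v y * w y) (v x * d + w x * c) x := by
  have := HP.of_has (j := j) (hv.1.hasFDerivAt.mul hw.1.hasFDerivAt)
  rw [← hv.2, ← hw.2]
  exact this

lemma HP.add {j : Fin 3} {v w : E3 → ℝ} {c d : ℝ} {x : E3} (hv : HP j v c x) (hw : HP j w d x) :
    HP j (fun y => v y + w y) (c + d) x := by
  have := HP.of_has (j := j) (hv.1.hasFDerivAt.add hw.1.hasFDerivAt)
  rw [← hv.2, ← hw.2]
  exact this

lemma HP.sub {j : Fin 3} {v w : E3 → ℝ} {c d : ℝ} {x : E3} (hv : HP j v c x) (hw : HP j w d x) :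
    HP j (fun y => v y - w y) (c - d) x := by
  have := HP.of_has (j := j) (hv.1.hasFDerivAt.sub hw.1.hasFDerivAt)
  rw [← hv.2, ← hw.2]
  exact this

lemma HP.const {j : Fin 3} (c : ℝ) {x : E3} : HP j (fun _ => c) 0 x := by
  have := HP.of_has (j := j) (hasFDerivAt_const c x)
  exact this

lemma HP.coord {j k : Fin 3} {x : E3} : HP j (fun y => y k) (if j = k then 1 else 0) x := by
  have h : HasFDerivAt (fun y : E3 => y k) (EuclideanSpace.proj k : E3 →L[ℝ] ℝ) x :=
    (EuclideanSpace.proj k : E3 →L[ℝ] ℝ).hasFDerivAt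
  have := HP.of_has (j := j) h
  convert this using 1
  simp [e3, eq_comm]

lemma HP.rpow {j : Fin 3} {v : E3 → ℝ} {c : ℝ} {x : E3} (r : ℝ) (hv : HP j v c x) (h0 : v x ≠ 0) :
    HP j (fun y => v y ^ r) (r * v x ^ (r - 1) * c) x := by
  have := HP.of_has (j := j) (hv.1.hasFDerivAt.rpow_const (p := r) (Or.inl h0))
  rw [← hv.2]
  exact this

lemma HP.inv {j : Fin 3} {v : E3 → ℝ} {c : ℝ} {x : E3} (hv : HP j v c x) (h0 : v x ≠ 0) :
    HP j (fun y => (v y)⁻¹) (-c / v x ^ 2) x := by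
  have := HP.of_has (j := j) ((hasDerivAt_inv h0).comp_hasFDerivAt x hv.1.hasFDerivAt)
  refine ⟨this.1, this.2.trans ?_⟩
  rw [← hv.2, pdR]
  simp
  ring

lemma HP.congr {j : Fin 3} {v w : E3 → ℝ} {c d : ℝ} {x : E3} (hv : HP j v c x)
    (h : ∀ y, w y = v y) (hd : d = c) : HP j w d x := by
  obtain rfl : w = v := funext h
  rw [hd]; exact hv

/-- squared norm in coordinates -/
lemma nsq (x : E3) : ‖x‖ ^ 2 = x 0 * x 0 + x 1 * x 1 + x 2 * x 2 := by
  rw [EuclideanSpace.norm_sq_eq, Fin.sum_univ_three]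
  simp [sq]

lemma HP.nsq {j : Fin 3} {x : E3} : HP j (fun y => ‖y‖ ^ 2) (2 * x j) x := by
  refine (((HP.coord (k := 0)).mul (HP.coord (k := 0))).add
    ((HP.coord (k := 1)).mul (HP.coord (k := 1))) |>.add
    ((HP.coord (k := 2)).mul (HP.coord (k := 2)))).congr (fun y => _root_.nsq y) ?_
  fin_cases j <;> simp <;> ring

/-! ### Real Schwartz functions as a predicate -/

/-- `h` is a Schwartz function. -/
def IsS (h : E3 → ℝ) : Prop := ∃ F : SchwartzMap E3 ℝ, ∀ x, F x = h x

lemma IsS.eq_coe {h : E3 → ℝ} (hh : IsS h) : ∃ F : SchwartzMap E3 ℝ, ⇑F = h := by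
  obtain ⟨F, hF⟩ := hh
  exact ⟨F, funext hF⟩

lemma IsS.add {h k : E3 → ℝ} (hh : IsS h) (hk : IsS k) : IsS (fun x => h x + k x) := by
  obtain ⟨F, hF⟩ := hh
  obtain ⟨G, hG⟩ := hk
  exact ⟨F + G, fun x => by simp [hF, hG]⟩

lemma IsS.sub {h k : E3 → ℝ} (hh : IsS h) (hk : IsS k) : IsS (fun x => h x - k x) := by
  obtain ⟨F, hF⟩ := hh
  obtain ⟨G, hG⟩ := hk
  exact ⟨F - G, fun x => by simp [hF, hG]⟩

lemma IsS.tg {h : E3 → ℝ} (hh : IsS h) : h.HasTemperateGrowth := by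
  obtain ⟨F, rfl⟩ := hh.eq_coe
  exact F.hasTemperateGrowth

lemma IsS.tmul {h k : E3 → ℝ} (hk : k.HasTemperateGrowth) (hh : IsS h) :
    IsS (fun x => k x * h x) := by
  obtain ⟨F, hF⟩ := hh
  exact ⟨SchwartzMap.smulLeftCLM ℝ k F, fun x => by
    rw [SchwartzMap.smulLeftCLM_apply_apply hk, hF]; rfl⟩

lemma IsS.mul {h k : E3 → ℝ} (hh : IsS h) (hk : IsS k) : IsS (fun x => h x * k x) :=
  IsS.tmul hh.tg hk

lemma IsS.mult {h k : E3 → ℝ} (hh : IsS h) (hk : k.HasTemperateGrowth) :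
    IsS (fun x => h x * k x) := by
  simpa [mul_comm] using IsS.tmul hk hh

lemma IsS.sum3 {h : Fin 3 → E3 → ℝ} (hh : ∀ j, IsS (h j)) : IsS (fun x => ∑ j, h j x) := by
  simp only [Fin.sum_univ_three]
  exact ((hh 0).add (hh 1)).add (hh 2)

lemma IsS.pdR {h : E3 → ℝ} (hh : IsS h) (j : Fin 3) : IsS (pdR j h) := by
  obtain ⟨F, rfl⟩ := hh.eq_coe
  exact ⟨LineDeriv.lineDerivOp (e3 j) F, fun x => by
    rw [SchwartzMap.lineDerivOp_apply_eq_fderiv]; rfl⟩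

lemma IsS.contDiff {h : E3 → ℝ} (hh : IsS h) : ContDiff ℝ (⊤ : ℕ∞) h := by
  obtain ⟨F, rfl⟩ := hh.eq_coe
  exact F.smooth _

lemma IsS.diff {h : E3 → ℝ} (hh : IsS h) : Differentiable ℝ h :=
  hh.contDiff.differentiable (by simp)

lemma IsS.integrable {h : E3 → ℝ} (hh : IsS h) : Integrable h := by
  obtain ⟨F, rfl⟩ := hh.eq_coe
  exact F.integrable

lemma IsS.bound {h : E3 → ℝ} (hh : IsS h) (k : ℕ) :
    ∃ C, 0 ≤ C ∧ ∀ x, (1 + ‖x‖) ^ k * |h x| ≤ C := by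
  obtain ⟨F, rfl⟩ := hh.eq_coe
  have := fun x => SchwartzMap.one_add_le_sup_seminorm_apply (𝕜 := ℝ) (m := (k, 0)) le_rfl le_rfl F x
  simp only [norm_iteratedFDeriv_zero, Real.norm_eq_abs] at this
  exact ⟨_, le_trans (by positivity) (this 0), this⟩

lemma pdR_comm {h : E3 → ℝ} (hh : IsS h) (j k : Fin 3) (x : E3) :
    pdR j (pdR k h) x = pdR k (pdR j h) x := by
  have h2 : ContDiffAt ℝ 2 h x := (hh.contDiff.of_le (WithTop.coe_le_coe.mpr le_top)).contDiffAt
  have hs := h2.isSymmSndFDerivAt (by simp)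
  have hd : DifferentiableAt ℝ (fderiv ℝ h) x :=
    ((hh.contDiff.fderiv_right (m := 1) (WithTop.coe_le_coe.mpr le_top)).differentiable (by simp)) x
  have key : ∀ i l : Fin 3, pdR i (pdR l h) x = fderiv ℝ (fderiv ℝ h) x (e3 i) (e3 l) := by
    intro i l
    have : HasFDerivAt (fun y => fderiv ℝ h y (e3 l))
        ((ContinuousLinearMap.apply ℝ ℝ (e3 l)).comp (fderiv ℝ (fderiv ℝ h) x)) x :=
      (ContinuousLinearMap.apply ℝ ℝ (e3 l)).hasFDerivAt.comp x hd.hasFDerivAt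
    change fderiv ℝ (fun y => fderiv ℝ h y (e3 l)) x (e3 i) = _
    rw [this.fderiv]; simp
  rw [key, key]
  exact hs _ _

lemma integral_pdR_zero {F : E3 → ℝ} {j : Fin 3} (hd : Differentiable ℝ F) (hF : Integrable F)
    (hF' : Integrable (pdR j F)) : ∫ x, pdR j F x = 0 := by
  have := integral_mul_fderiv_eq_neg_fderiv_mul_of_integrable (μ := (volume : Measure E3))
    (𝕜 := ℝ) (f := fun _ => (1 : ℝ)) (g := F) (v := e3 j) (by simp) (by simpa using! hF')
    (by simpa using hF) (fun x _ => by fun_prop) (fun x _ => hd x)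
  simpa using! this

/-! ### The weight -/

/-- `ρ = (1 + s²|x|²)^{-1/2}`. -/
def rho (s : ℝ) (x : E3) : ℝ := (1 + ‖s • x‖ ^ 2) ^ (-(1 / 2) : ℝ)

lemma rho_tg (s : ℝ) : (rho s).HasTemperateGrowth := by
  have h1 := Function.hasTemperateGrowth_one_add_norm_sq_rpow (H := E3) (-(1/2))
  exact h1.comp (g := fun x : E3 => (1 + ‖x‖ ^ 2) ^ (-(1 / 2) : ℝ)) (f := fun x => s • x) (by fun_prop)

lemma coord_tg (j : Fin 3) : (fun x : E3 => x j).HasTemperateGrowth :=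
  (EuclideanSpace.proj j : E3 →L[ℝ] ℝ).hasTemperateGrowth

lemma rho_base (s : ℝ) (x : E3) : 1 + ‖s • x‖ ^ 2 = 1 + s ^ 2 * ‖x‖ ^ 2 := by
  rw [norm_smul, mul_pow]; simp

lemma rho_pos (s : ℝ) (x : E3) : 0 < rho s x := by unfold rho; positivity

lemma rho_sq (s : ℝ) (x : E3) : rho s x ^ 2 * (1 + s ^ 2 * ‖x‖ ^ 2) = 1 := by
  unfold rho
  rw [← rho_base]
  have hp : (0 : ℝ) < 1 + ‖s • x‖ ^ 2 := by positivity
  rw [← Real.rpow_natCast, ← Real.rpow_mul hp.le]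
  norm_num
  rw [Real.rpow_neg_one]
  field_simp

lemma rho_le_one (s : ℝ) (x : E3) : rho s x ≤ 1 := by
  have h := rho_sq s x
  have h0 := rho_pos s x
  have : 0 ≤ rho s x ^ 2 * (s ^ 2 * ‖x‖ ^ 2) := by positivity
  nlinarith

lemma HP.rho {s : ℝ} {j : Fin 3} {x : E3} :
    HP j (rho s) (- s ^ 2 * rho s x ^ 3 * x j) x := by
  have hb : HP j (fun y : E3 => 1 + s ^ 2 * ‖y‖ ^ 2) (0 + (s ^ 2 * (2 * x j) + ‖x‖ ^ 2 * 0)) x :=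
    (HP.const 1).add ((HP.const (s ^ 2)).mul HP.nsq)
  have hp : (0 : ℝ) < 1 + s ^ 2 * ‖x‖ ^ 2 := by positivity
  refine (hb.rpow (-(1/2)) hp.ne').congr (fun y => by rw [_root_.rho, rho_base]) ?_
  have : (1 + s ^ 2 * ‖x‖ ^ 2) ^ (-(1 / 2) - 1 : ℝ) = _root_.rho s x ^ 3 := by
    unfold _root_.rho
    rw [rho_base, ← Real.rpow_natCast (_ ^ (-(1 / 2) : ℝ)) 3, ← Real.rpow_mul hp.le]
    norm_num
  rw [this]; ring

/-! ### The smooth part of the virial current -/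

/-- The vector field `X = ρ x`. -/
def Xf (s : ℝ) (j : Fin 3) (y : E3) : ℝ := rho s y * y j

/-- The divergence of `X`. -/
def Df (s : ℝ) (y : E3) : ℝ := 2 * rho s y + rho s y * (rho s y * rho s y)

lemma Xf_tg (s : ℝ) (j : Fin 3) : (Xf s j).HasTemperateGrowth := (rho_tg s).mul (coord_tg j)

lemma Df_tg (s : ℝ) : (Df s).HasTemperateGrowth :=
  ((Function.HasTemperateGrowth.const 2).mul (rho_tg s)).add
    ((rho_tg s).mul ((rho_tg s).mul (rho_tg s)))

lemma HP.Xf {s : ℝ} {j k : Fin 3} {x : E3} : HP j (Xf s k)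
    (_root_.rho s x * (if j = k then 1 else 0) - s ^ 2 * _root_.rho s x ^ 3 * x j * x k) x :=
  (HP.rho.mul HP.coord).congr (fun _ => rfl) (by ring)

lemma HP.Df {s : ℝ} {j : Fin 3} {x : E3} : HP j (Df s)
    (-(2 * _root_.rho s x ^ 3 + 3 * _root_.rho s x ^ 5) * s ^ 2 * x j) x :=
  (((HP.const 2).mul HP.rho).add (HP.rho.mul (HP.rho.mul HP.rho))).congr (fun _ => rfl) (by ring)

/-- `X · ∇ h`. -/
def Xd (s : ℝ) (h : E3 → ℝ) (y : E3) : ℝ :=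
  Xf s 0 y * pdR 0 h y + Xf s 1 y * pdR 1 h y + Xf s 2 y * pdR 2 h y

/-- `|∇ h|²`. -/
def gsq (h : E3 → ℝ) (y : E3) : ℝ :=
  pdR 0 h y * pdR 0 h y + pdR 1 h y * pdR 1 h y + pdR 2 h y * pdR 2 h y

/-- `Re (ḡ ∇f)`-type pairing with the Hessian of the weight. -/
def hessq (s : ℝ) (h : E3 → ℝ) (x : E3) : ℝ :=
  rho s x * gsq h x - s ^ 2 * rho s x ^ 3 * (x 0 * pdR 0 h x + x 1 * pdR 1 h x + x 2 * pdR 2 h x) ^ 2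

/-- one half of the current, for one real component -/
def Ah (s : ℝ) (p : E3 → ℝ) (j : Fin 3) (y : E3) : ℝ :=
  Xf s j y * gsq p y - pdR j p y * (2 * Xd s p y + Df s y * p y)

lemma IsS.gsq {p : E3 → ℝ} (hp : IsS p) : IsS (gsq p) :=
  (((hp.pdR 0).mul (hp.pdR 0)).add ((hp.pdR 1).mul (hp.pdR 1))).add ((hp.pdR 2).mul (hp.pdR 2))

lemma IsS.Xd {p : E3 → ℝ} (hp : IsS p) (s : ℝ) : IsS (Xd s p) :=
  (((hp.pdR 0).tmul (Xf_tg s 0)).add ((hp.pdR 1).tmul (Xf_tg s 1))).add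
    ((hp.pdR 2).tmul (Xf_tg s 2))

lemma IsS.Ah {p : E3 → ℝ} (hp : IsS p) (s : ℝ) (j : Fin 3) : IsS (Ah s p j) :=
  (hp.gsq.tmul (Xf_tg s j)).sub ((hp.pdR j).mul
    (((hp.Xd s).tmul (Function.HasTemperateGrowth.const 2)).add (hp.tmul (Df_tg s))))

lemma Df_eq (s : ℝ) (x : E3) : Df s x = 3 * rho s x - s ^ 2 * rho s x ^ 3 * ‖x‖ ^ 2 := by
  have := rho_sq s x
  unfold Df
  linear_combination (rho s x) * this

lemma div_Ah {p : E3 → ℝ} (hp : IsS p) (s : ℝ) (x : E3) :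
    ∑ j, pdR j (Ah s p j) x =
      -(lapR p x) * (2 * Xd s p x + Df s x * p x) - 2 * hessq s p x
        + (2 * rho s x ^ 3 + 3 * rho s x ^ 5) * s ^ 2 * p x *
          (x 0 * pdR 0 p x + x 1 * pdR 1 p x + x 2 * pdR 2 p x) := by
  have hp0 : ∀ j, HP j p (pdR j p x) x := fun j => HP.of_diff (hp.diff x)
  have hp1 : ∀ j k, HP j (pdR k p) (pdR j (pdR k p) x) x := fun j k => HP.of_diff ((hp.pdR k).diff x)
  have hg : ∀ j, HP j (gsq p) _ x := fun j =>
    (((hp1 j 0).mul (hp1 j 0)).add ((hp1 j 1).mul (hp1 j 1))).add ((hp1 j 2).mul (hp1 j 2))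
  have hX : ∀ j, HP j (Xd s p) _ x := fun j =>
    ((HP.Xf.mul (hp1 j 0)).add (HP.Xf.mul (hp1 j 1))).add (HP.Xf.mul (hp1 j 2))
  have hA : ∀ j, HP j (Ah s p j) _ x := fun j =>
    (HP.Xf.mul (hg j)).sub ((hp1 j j).mul (((HP.const 2).mul (hX j)).add (HP.Df.mul (hp0 j))))
  have hlap : lapR p x = pdR 0 (pdR 0 p) x + pdR 1 (pdR 1 p) x + pdR 2 (pdR 2 p) x := by
    rw [lapR, Fin.sum_univ_three]
  rw [Fin.sum_univ_three, (hA 0).2, (hA 1).2, (hA 2).2, hlap, pdR_comm hp 1 0, pdR_comm hp 2 0,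
    pdR_comm hp 2 1]
  have hD := Df_eq s x
  rw [nsq] at hD
  simp [hessq]
  unfold Xd gsq Xf
  rw [hD]
  ring

/-- the smooth part of the current -/
def Af (s : ℝ) (p q gr gi : E3 → ℝ) (j : Fin 3) (y : E3) : ℝ :=
  (p y * gi y - q y * gr y) * Xf s j y + (Ah s p j y + Ah s q j y)

lemma IsS.Af {p q gr gi : E3 → ℝ} (hp : IsS p) (hq : IsS q) (hgr : IsS gr) (hgi : IsS gi)
    (s : ℝ) (j : Fin 3) : IsS (Af s p q gr gi j) :=
  (((hp.mul hgi).sub (hq.mul hgr)).mult (Xf_tg s j)).add ((hp.Ah s j).add (hq.Ah s j))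

/-- The time derivative of the momentum density. -/
def Idens (s : ℝ) (p q gr gi : E3 → ℝ) (x : E3) : ℝ :=
  gr x * Xd s q x - gi x * Xd s p x + p x * Xd s gi x - q x * Xd s gr x

lemma Idens_eq {p q gr gi : E3 → ℝ} (hp : IsS p) (hq : IsS q) (hgr : IsS gr) (hgi : IsS gi)
    (s : ℝ) (x : E3) (W : ℝ) (h1 : gr x = - (lapR q x - W * q x)) (h2 : gi x = lapR p x - W * p x) :
    Idens s p q gr gi x = ∑ j, pdR j (Af s p q gr gi j) x
      + W * (Df s x * (p x ^ 2 + q x ^ 2) + 2 * (p x * Xd s p x + q x * Xd s q x))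
      + 2 * (hessq s p x + hessq s q x)
      - (2 * rho s x ^ 3 + 3 * rho s x ^ 5) * s ^ 2 * (p x *
          (x 0 * pdR 0 p x + x 1 * pdR 1 p x + x 2 * pdR 2 p x) + q x *
          (x 0 * pdR 0 q x + x 1 * pdR 1 q x + x 2 * pdR 2 q x)) := by
  have d : ∀ {h : E3 → ℝ}, IsS h → ∀ j, HP j h (pdR j h x) x := fun h j => HP.of_diff (h.diff x)
  have hA : ∀ j, HP j (Af s p q gr gi j) _ x := fun j =>
    ((((d hp j).mul (d hgi j)).sub ((d hq j).mul (d hgr j))).mul HP.Xf).add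
      ((d (hp.Ah s j) j).add (d (hq.Ah s j) j))
  have e1 := div_Ah hp s x
  have e2 := div_Ah hq s x
  have hD := Df_eq s x
  rw [nsq] at hD
  rw [Fin.sum_univ_three] at e1 e2
  rw [Fin.sum_univ_three, (hA 0).2, (hA 1).2, (hA 2).2]
  simp only [if_true]
  have e1' : pdR 0 (Ah s p 0) x = _ := eq_sub_of_add_eq (eq_sub_of_add_eq e1)
  have e2' : pdR 0 (Ah s q 0) x = _ := eq_sub_of_add_eq (eq_sub_of_add_eq e2)
  rw [e1', e2', Idens, h1, h2]
  unfold Xd Xf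
  rw [hD]
  ring

/-! ### The singular part of the virial current -/

lemma integrable_of_rap {h : E3 → ℝ} (hm : AEStronglyMeasurable h volume) {C : ℝ}
    (hC : ∀ x : E3, x ≠ 0 → (1 + ‖x‖) ^ 4 * |h x| ≤ C) : Integrable h := by
  have h4 : Integrable (fun x : E3 => C * (1 + ‖x‖) ^ (-(4 : ℝ))) :=
    (integrable_one_add_norm (by simp; norm_num)).const_mul C
  refine h4.mono' hm ?_
  have : ∀ᵐ x : E3, x ≠ 0 := by
    simp [ae_iff, measure_singleton]
  filter_upwards [this] with x hx
  have hp : (0 : ℝ) < 1 + ‖x‖ := by positivity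
  have := hC x hx
  rw [Real.rpow_neg hp.le, Real.norm_eq_abs, ← div_eq_mul_inv, le_div_iff₀ (by positivity)]
  have e : (1 + ‖x‖) ^ (4 : ℝ) = (1 + ‖x‖) ^ (4 : ℕ) := by
    rw [← Real.rpow_natCast]; norm_num
  rw [e]; linarith

lemma abs_coord_le (x : E3) (j : Fin 3) : |x j| ≤ ‖x‖ := by
  simpa using PiLp.norm_apply_le x j

lemma sing_current (j : Fin 3) (c M : E3 → ℝ) (hc : Differentiable ℝ c) (K : ℝ) (hK : 0 ≤ K)
    (hcK : ∀ x, |c x| ≤ K) (hcj : ∀ x, |x j * pdR j c x| ≤ K)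
    (hM : ∀ x, x ≠ 0 → DifferentiableAt ℝ M x)
    (hM5 : ∀ x, x ≠ 0 → (1 + ‖x‖) ^ 5 * |M x| ≤ K)
    (hMj : ∀ x, x ≠ 0 → (1 + ‖x‖) ^ 4 * (‖x‖ * |pdR j M x|) ≤ K)
    (h0 : Tendsto M (𝓝[≠] 0) (𝓝 0)) :
    Differentiable ℝ (fun y => c y * M y * y j) ∧ Integrable (fun y => c y * M y * y j) ∧
      Integrable (pdR j (fun y => c y * M y * y j)) := by
  have hd : Differentiable ℝ (fun y => c y * M y * y j) := by
    intro x
    by_cases hx : x = 0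
    · subst hx
      have : HasFDerivAt (fun y : E3 => c y * M y * y j) (0 : E3 →L[ℝ] ℝ) 0 := by
        rw [hasFDerivAt_iff_isLittleO_nhds_zero]
        simp only [zero_add, zero_apply, sub_zero]
        simp only [PiLp.zero_apply, mul_zero, sub_zero]
        rw [Asymptotics.isLittleO_iff]
        intro ε hε
        have h1 : ∀ᶠ y in 𝓝[≠] (0 : E3), |M y| < ε / (K + 1) := by
          have := (h0.abs).eventually (gt_mem_nhds (show |(0:ℝ)| < ε / (K + 1) by
            rw [abs_zero]; positivity))
          exact this
        rw [eventually_nhdsWithin_iff] at h1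
        filter_upwards [h1] with y hy
        by_cases hy0 : y = 0
        · subst hy0; simp
        · have h2 := hy hy0
          rw [Real.norm_eq_abs, abs_mul, abs_mul]
          have h3 := abs_coord_le y j
          have h4 : |c y| * |M y| ≤ ε := by
            calc |c y| * |M y| ≤ (K + 1) * (ε / (K + 1)) := by
                  apply mul_le_mul _ h2.le (abs_nonneg _) (by positivity)
                  linarith [hcK y]
              _ = ε := by field_simp
          exact mul_le_mul h4 h3 (abs_nonneg _) hε.le
      exact this.differentiableAt
    · exact (((hc x).mul (hM x hx)).mul (HP.coord (j := j) (k := j)).1)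
  refine ⟨hd, ?_, ?_⟩
  · refine integrable_of_rap (C := K * K) hd.continuous.aestronglyMeasurable fun x hx => ?_
    rw [abs_mul, abs_mul]
    have h1 := hM5 x hx
    have h2 := hcK x
    have h3 : |x j| ≤ 1 + ‖x‖ := by linarith [abs_coord_le x j]
    calc (1 + ‖x‖) ^ 4 * (|c x| * |M x| * |x j|)
        ≤ (1 + ‖x‖) ^ 4 * (|c x| * |M x| * (1 + ‖x‖)) := by gcongr
      _ = |c x| * ((1 + ‖x‖) ^ 5 * |M x|) := by ring
      _ ≤ K * K := by gcongr
  · refine integrable_of_rap (C := 3 * (K * K)) ?_ fun x hx => ?_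
    · exact (measurable_fderiv_apply_const ℝ _ (e3 j)).aestronglyMeasurable
    · have hb : HP j (fun y => c y * M y * y j) _ x :=
        ((HP.of_diff (hc x)).mul (HP.of_diff (hM x hx))).mul HP.coord
      rw [hb.2]
      have hM4 : (1 + ‖x‖) ^ 4 * |M x| ≤ K := by
        refine le_trans ?_ (hM5 x hx)
        gcongr
        · linarith [norm_nonneg x]
        · norm_num
      have t1 : |c x * M x * (if j = j then 1 else 0)
            + x j * (c x * pdR j M x + M x * pdR j c x)| ≤
          |c x| * |M x| + |c x| * (‖x‖ * |pdR j M x|) + |M x| * |x j * pdR j c x| := by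
        have e : c x * M x * (if j = j then 1 else 0)
            + x j * (c x * pdR j M x + M x * pdR j c x) =
          c x * M x + c x * (x j * pdR j M x) + M x * (x j * pdR j c x) := by simp; ring
        rw [e]
        refine (abs_add_three _ _ _).trans ?_
        rw [abs_mul (c x) (M x), abs_mul (c x), abs_mul (x j) (pdR j M x), abs_mul (M x)]
        gcongr
        exact abs_coord_le x j
      calc _ ≤ (1 + ‖x‖) ^ 4 * (|c x| * |M x| + |c x| * (‖x‖ * |pdR j M x|)
              + |M x| * |x j * pdR j c x|) := by gcongr
        _ = |c x| * ((1 + ‖x‖) ^ 4 * |M x|) + |c x| * ((1 + ‖x‖) ^ 4 * (‖x‖ * |pdR j M x|))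
              + ((1 + ‖x‖) ^ 4 * |M x|) * |x j * pdR j c x| := by ring
        _ ≤ K * K + K * K + K * K := by
            have := hMj x hx
            gcongr <;> first | exact hcK x | exact hcj x
        _ = 3 * (K * K) := by ring

/-- `|f|`. -/
def nf (p q : E3 → ℝ) (x : E3) : ℝ := √(p x ^ 2 + q x ^ 2)

lemma nf_sq (p q : E3 → ℝ) (x : E3) : nf p q x ^ 2 = p x ^ 2 + q x ^ 2 :=
  Real.sq_sqrt (by positivity)

lemma nf_nonneg (p q : E3 → ℝ) (x : E3) : 0 ≤ nf p q x := Real.sqrt_nonneg _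

lemma nf_p (p q : E3 → ℝ) (x : E3) : |p x| ≤ nf p q x := by
  apply Real.abs_le_sqrt; nlinarith [sq_nonneg (q x)]

lemma nf_q (p q : E3 → ℝ) (x : E3) : |q x| ≤ nf p q x := by
  apply Real.abs_le_sqrt; nlinarith [sq_nonneg (p x)]

lemma nf_le (p q : E3 → ℝ) (x : E3) : nf p q x ≤ |p x| + |q x| := by
  apply Real.sqrt_le_iff.mpr
  constructor
  · positivity
  · nlinarith [abs_nonneg (p x), abs_nonneg (q x), sq_abs (p x), sq_abs (q x)]

lemma nf_bound {p q : E3 → ℝ} (hp : IsS p) (hq : IsS q) (k : ℕ) :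
    ∃ C, 0 ≤ C ∧ ∀ x, (1 + ‖x‖) ^ k * nf p q x ≤ C := by
  obtain ⟨C1, h1, h1'⟩ := hp.bound k
  obtain ⟨C2, h2, h2'⟩ := hq.bound k
  refine ⟨C1 + C2, by positivity, fun x => ?_⟩
  have := nf_le p q x
  calc (1 + ‖x‖) ^ k * nf p q x ≤ (1 + ‖x‖) ^ k * (|p x| + |q x|) := by gcongr
    _ ≤ _ := by linarith [h1' x, h2' x]

lemma nf_cont {p q : E3 → ℝ} (hp : IsS p) (hq : IsS q) : Continuous (nf p q) := by
  have := hp.diff.continuous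
  have := hq.diff.continuous
  unfold nf
  fun_prop

/-- Vanishing at the origin forced by the equation. -/
lemma sing_bounds (a b : ℝ) (hb0 : 0 < b) (hb1 : b < 1) (n : E3 → ℝ) (hn : ∀ x, 0 ≤ n x)
    (K : ℝ) (hK : 0 ≤ K) (hnK : ∀ x, n x ≤ K)
    (hW : ∀ x, x ≠ 0 → |a / ‖x‖ ^ 2 + ‖x‖ ^ (-b) * n x ^ 2| * n x ≤ K) :
    (∃ C, 0 ≤ C ∧ ∀ x, x ≠ 0 → ‖x‖ ^ (-b) * n x ^ 3 ≤ C) ∧ Tendsto n (𝓝[≠] 0) (𝓝 0) ∧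
      (a ≠ 0 → (∃ C, 0 ≤ C ∧ ∀ x, x ≠ 0 → n x / ‖x‖ ≤ C) ∧
        Tendsto (fun x => n x / ‖x‖) (𝓝[≠] 0) (𝓝 0)) := by
  have hnorm : Tendsto (fun x : E3 => ‖x‖) (𝓝[≠] 0) (𝓝 0) := by
    have : Tendsto (fun x : E3 => ‖x‖) (𝓝 0) (𝓝 ‖(0 : E3)‖) := continuous_norm.tendsto 0
    rw [norm_zero] at this
    exact this.mono_left nhdsWithin_le_nhds
  have hpow : ∀ r : ℝ, 0 < r → Tendsto (fun x : E3 => ‖x‖ ^ r) (𝓝[≠] 0) (𝓝 0) := by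
    intro r hr
    have := hnorm.rpow_const (p := r) (Or.inr hr.le)
    rwa [Real.zero_rpow hr.ne'] at this
  by_cases ha : a = 0
  · subst ha
    have h3 : ∀ x, x ≠ 0 → ‖x‖ ^ (-b) * n x ^ 3 ≤ K := by
      intro x hx
      have h := hW x hx
      have hpos : 0 ≤ ‖x‖ ^ (-b) * n x ^ 2 := by positivity
      rw [zero_div, zero_add, abs_of_nonneg hpos] at h
      linarith
    refine ⟨⟨K, hK, h3⟩, ?_, fun h => absurd rfl h⟩
    have h4 : ∀ x, x ≠ 0 → n x ≤ (K * ‖x‖ ^ b) ^ ((1 : ℝ) / 3) := by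
      intro x hx
      have hx' : 0 < ‖x‖ := norm_pos_iff.mpr hx
      have h5 : n x ^ 3 ≤ K * ‖x‖ ^ b := by
        have := h3 x hx
        rw [Real.rpow_neg hx'.le, inv_mul_eq_div, div_le_iff₀ (by positivity)] at this
        exact this
      calc n x = (n x ^ 3) ^ ((1 : ℝ) / 3) := by
            rw [← Real.rpow_natCast, ← Real.rpow_mul (hn x)]; norm_num
        _ ≤ _ := Real.rpow_le_rpow (pow_nonneg (hn x) 3) h5 (by norm_num)
    have h6 : Tendsto (fun x : E3 => (K * ‖x‖ ^ b) ^ ((1 : ℝ) / 3)) (𝓝[≠] 0) (𝓝 0) := by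
      have := ((hpow b hb0).const_mul K).rpow_const (p := (1 : ℝ) / 3) (Or.inr (by norm_num))
      rw [mul_zero, Real.zero_rpow (by norm_num)] at this
      exact this
    refine tendsto_of_tendsto_of_tendsto_of_le_of_le' tendsto_const_nhds h6
      (Eventually.of_forall hn) ?_
    filter_upwards [self_mem_nhdsWithin] with x hx using h4 x hx
  · have ha' : 0 < |a| := abs_pos.mpr ha
    have h1 : ∀ x, x ≠ 0 → n x / ‖x‖ ≤ (K * ‖x‖ + K ^ 3 * ‖x‖ ^ (1 - b)) / |a| := by
      intro x hx
      have hx' : 0 < ‖x‖ := norm_pos_iff.mpr hx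
      have h := hW x hx
      have h2 : |a / ‖x‖ ^ 2| * n x ≤ K + ‖x‖ ^ (-b) * n x ^ 3 := by
        have hpos : 0 ≤ ‖x‖ ^ (-b) * n x ^ 2 := by positivity
        have h3 : |a / ‖x‖ ^ 2| ≤ |a / ‖x‖ ^ 2 + ‖x‖ ^ (-b) * n x ^ 2| + ‖x‖ ^ (-b) * n x ^ 2 := by
          have := abs_sub (a / ‖x‖ ^ 2 + ‖x‖ ^ (-b) * n x ^ 2) (‖x‖ ^ (-b) * n x ^ 2)
          rw [add_sub_cancel_right, abs_of_nonneg hpos] at this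
          exact this
        have := mul_le_mul_of_nonneg_right h3 (hn x)
        nlinarith
      rw [abs_div, abs_of_nonneg (by positivity : 0 ≤ ‖x‖ ^ 2)] at h2
      have h4 : ‖x‖ ^ (-b) * n x ^ 3 ≤ ‖x‖ ^ (-b) * K ^ 3 := by
        have := hn x
        have := hnK x
        gcongr
      have e : ‖x‖ ^ (1 - b) = ‖x‖ * ‖x‖ ^ (-b) := by
        rw [sub_eq_add_neg, Real.rpow_add hx', Real.rpow_one]
      rw [le_div_iff₀ ha', e]
      have h5 : |a| / ‖x‖ ^ 2 * n x * ‖x‖ ≤ (K + ‖x‖ ^ (-b) * K ^ 3) * ‖x‖ := by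
        gcongr; linarith
      have h6 : |a| / ‖x‖ ^ 2 * n x * ‖x‖ = n x / ‖x‖ * |a| := by field_simp
      rw [← h6]
      linarith
    have hT : Tendsto (fun x => n x / ‖x‖) (𝓝[≠] 0) (𝓝 0) := by
      have h2 : Tendsto (fun x : E3 => (K * ‖x‖ + K ^ 3 * ‖x‖ ^ (1 - b)) / |a|) (𝓝[≠] 0) (𝓝 0) := by
        have := ((hnorm.const_mul K).add ((hpow (1 - b) (by linarith)).const_mul (K ^ 3))).div_const |a|
        simpa using this
      refine tendsto_of_tendsto_of_tendsto_of_le_of_le' tendsto_const_nhds h2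
        (Eventually.of_forall fun x => div_nonneg (hn x) (norm_nonneg x)) ?_
      filter_upwards [self_mem_nhdsWithin] with x hx using h1 x hx
    set C1 := (K + K ^ 3) / |a| + K with hC1
    have hC1n : 0 ≤ C1 := by positivity
    have h2 : ∀ x, x ≠ 0 → n x / ‖x‖ ≤ C1 := by
      intro x hx
      have hx' : 0 < ‖x‖ := norm_pos_iff.mpr hx
      rcases le_total ‖x‖ 1 with hle | hle
      · refine (h1 x hx).trans ?_
        have : ‖x‖ ^ (1 - b) ≤ 1 := Real.rpow_le_one hx'.le hle (by linarith)
        have : (K * ‖x‖ + K ^ 3 * ‖x‖ ^ (1 - b)) / |a| ≤ (K * 1 + K ^ 3 * 1) / |a| := by gcongr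
        rw [hC1]
        simp only [mul_one] at this
        linarith
      · have : n x / ‖x‖ ≤ K := (div_le_self (hn x) hle).trans (hnK x)
        have : 0 ≤ (K + K ^ 3) / |a| := by positivity
        linarith
    refine ⟨⟨C1 * K ^ 2 + K ^ 3, by positivity, fun x hx => ?_⟩, ?_, fun _ => ⟨⟨C1, hC1n, h2⟩, hT⟩⟩
    · have hx' : 0 < ‖x‖ := norm_pos_iff.mpr hx
      have hnx := hn x
      have hnk := hnK x
      rcases le_total ‖x‖ 1 with hle | hle
      · have e : ‖x‖ ^ (-b) * n x ^ 3 = ‖x‖ ^ (1 - b) * (n x / ‖x‖ * n x ^ 2) := by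
          rw [show 1 - b = 1 + -b by ring, Real.rpow_add hx', Real.rpow_one]
          field_simp
        rw [e]
        have : ‖x‖ ^ (1 - b) ≤ 1 := Real.rpow_le_one hx'.le hle (by linarith)
        calc _ ≤ 1 * (C1 * K ^ 2) := by
              have := h2 x hx
              gcongr
          _ ≤ _ := by rw [one_mul]; linarith [pow_nonneg hK 3]
      · have : ‖x‖ ^ (-b) ≤ 1 := Real.rpow_le_one_of_one_le_of_nonpos hle (by linarith)
        calc _ ≤ 1 * K ^ 3 := by gcongr
          _ ≤ _ := by rw [one_mul]; linarith [mul_nonneg hC1n (pow_nonneg hK 2)]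
    · have := hT.mul hnorm
      rw [zero_mul] at this
      refine this.congr' ?_
      filter_upwards [self_mem_nhdsWithin] with x hx
      have hx' : ‖x‖ ≠ 0 := norm_ne_zero_iff.mpr hx
      field_simp

/-- Coefficient `α ρ + β ρ³`. -/
def cf (s α β : ℝ) (x : E3) : ℝ := α * rho s x + β * (rho s x * (rho s x * rho s x))

lemma HP.cf {s α β : ℝ} {j : Fin 3} {x : E3} : HP j (cf s α β)
    (-s ^ 2 * x j * (α * _root_.rho s x ^ 3 + 3 * β * _root_.rho s x ^ 5)) x :=
  (((HP.const α).mul HP.rho).add ((HP.const β).mul (HP.rho.mul (HP.rho.mul HP.rho)))).congr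
    (fun _ => rfl) (by ring)

lemma cf_bound (s α β : ℝ) (x : E3) : |cf s α β x| ≤ |α| + 3 * |β| := by
  have h0 := rho_pos s x
  have h1 := rho_le_one s x
  unfold cf
  refine (abs_add_le _ _).trans ?_
  rw [abs_mul, abs_mul, abs_of_pos h0, abs_of_pos (by positivity : 0 < rho s x * (rho s x * rho s x))]
  have h2 : rho s x * (rho s x * rho s x) ≤ 1 := by
    calc _ ≤ (1 : ℝ) * (1 * 1) := by gcongr
      _ = 1 := by norm_num
  nlinarith [abs_nonneg α, abs_nonneg β]

lemma cf_bound' (s α β : ℝ) (x : E3) (j : Fin 3) :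
    |x j * pdR j (cf s α β) x| ≤ |α| + 3 * |β| := by
  have h0 := rho_pos s x
  have h1 := rho_le_one s x
  rw [HP.cf.2]
  have e : x j * (-s ^ 2 * x j * (α * rho s x ^ 3 + 3 * β * rho s x ^ 5)) =
      -((s ^ 2 * x j ^ 2 * rho s x ^ 2) * (α * rho s x + 3 * β * rho s x ^ 3)) := by ring
  have h2 : s ^ 2 * x j ^ 2 * rho s x ^ 2 ≤ 1 := by
    have h3 := rho_sq s x
    have h4 : x j ^ 2 ≤ ‖x‖ ^ 2 := by
      rw [← sq_abs]; exact pow_le_pow_left₀ (abs_nonneg _) (abs_coord_le x j) 2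
    have : s ^ 2 * x j ^ 2 * rho s x ^ 2 ≤ s ^ 2 * ‖x‖ ^ 2 * rho s x ^ 2 := by gcongr
    nlinarith [sq_nonneg (rho s x)]
  rw [e, abs_neg, abs_mul, abs_of_nonneg (by positivity : 0 ≤ s ^ 2 * x j ^ 2 * rho s x ^ 2)]
  have h5 : |α * rho s x + 3 * β * rho s x ^ 3| ≤ |α| + 3 * |β| := by
    refine (abs_add_le _ _).trans ?_
    rw [abs_mul, abs_mul, abs_mul, abs_of_pos h0, abs_of_pos (pow_pos h0 3)]
    have : rho s x ^ 3 ≤ 1 := pow_le_one₀ h0.le h1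
    norm_num
    nlinarith [abs_nonneg α, abs_nonneg β]
  calc _ ≤ 1 * (|α| + 3 * |β|) := by gcongr
    _ = _ := one_mul _

/-- `|f|² / |x|²` -/
def M1 (p q : E3 → ℝ) (y : E3) : ℝ := (p y * p y + q y * q y) * (‖y‖ ^ 2)⁻¹

/-- `|x|^{-b} |f|⁴` -/
def M2 (b : ℝ) (p q : E3 → ℝ) (y : E3) : ℝ :=
  (‖y‖ ^ 2) ^ (-(b / 2)) * ((p y * p y + q y * q y) * (p y * p y + q y * q y))

lemma pow_norm_eq (b : ℝ) (y : E3) : (‖y‖ ^ 2) ^ (-(b / 2)) = ‖y‖ ^ (-b) := by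
  rw [← Real.rpow_natCast, ← Real.rpow_mul (norm_nonneg y)]
  congr 1
  push_cast
  ring

lemma nsq_ne {x : E3} (hx : x ≠ 0) : ‖x‖ ^ 2 ≠ 0 := pow_ne_zero 2 (norm_ne_zero_iff.mpr hx)

lemma HP.N {p q : E3 → ℝ} (hp : IsS p) (hq : IsS q) (j : Fin 3) (x : E3) :
    HP j (fun y => p y * p y + q y * q y) (2 * (p x * pdR j p x + q x * pdR j q x)) x :=
  (((HP.of_diff (hp.diff x)).mul (HP.of_diff (hp.diff x))).add
    ((HP.of_diff (hq.diff x)).mul (HP.of_diff (hq.diff x)))).congr (fun _ => rfl) (by ring)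

lemma HP.M1 {p q : E3 → ℝ} (hp : IsS p) (hq : IsS q) (j : Fin 3) {x : E3} (hx : x ≠ 0) :
    HP j (M1 p q) (2 * (p x * pdR j p x + q x * pdR j q x) / ‖x‖ ^ 2
      - 2 * x j * (p x ^ 2 + q x ^ 2) / (‖x‖ ^ 2) ^ 2) x :=
  ((HP.N hp hq j x).mul (HP.nsq.inv (nsq_ne hx))).congr (fun _ => rfl) (by
    field_simp
    ring)

lemma HP.M2 (b : ℝ) {p q : E3 → ℝ} (hp : IsS p) (hq : IsS q) (j : Fin 3) {x : E3} (hx : x ≠ 0) :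
    HP j (M2 b p q) (‖x‖ ^ (-b) * (4 * (p x ^ 2 + q x ^ 2) * (p x * pdR j p x + q x * pdR j q x))
      - b * x j / ‖x‖ ^ 2 * (‖x‖ ^ (-b) * (p x ^ 2 + q x ^ 2) ^ 2)) x := by
  refine ((HP.nsq.rpow (-(b / 2)) (nsq_ne hx)).mul
    ((HP.N hp hq j x).mul (HP.N hp hq j x))).congr (fun _ => rfl) ?_
  have hpos : 0 < ‖x‖ ^ 2 := by have := norm_pos_iff.mpr hx; positivity
  rw [Real.rpow_sub_one hpos.ne', pow_norm_eq]
  field_simp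
  ring

lemma abs_pq (p q c d n : ℝ) (h1 : |p| ≤ n) (h2 : |q| ≤ n) :
    |p * c + q * d| ≤ n * (|c| + |d|) := by
  refine (abs_add_le _ _).trans ?_
  rw [abs_mul, abs_mul, mul_add]
  gcongr

lemma M1_bounds {p q : E3 → ℝ} (hp : IsS p) (hq : IsS q) (C : ℝ) (hC : 0 ≤ C)
    (h : ∀ x, x ≠ 0 → nf p q x / ‖x‖ ≤ C) :
    ∃ K, 0 ≤ K ∧ (∀ x, x ≠ 0 → (1 + ‖x‖) ^ 5 * |M1 p q x| ≤ K) ∧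
      ∀ j, ∀ x, x ≠ 0 → (1 + ‖x‖) ^ 4 * (‖x‖ * |pdR j (M1 p q) x|) ≤ K := by
  obtain ⟨D, hD, hD'⟩ := nf_bound hp hq 5
  choose P hP hP' using fun j => (hp.pdR j).bound 4
  choose Q hQ hQ' using fun j => (hq.pdR j).bound 4
  have hM : ∀ x, x ≠ 0 → |M1 p q x| = nf p q x ^ 2 / ‖x‖ ^ 2 := by
    intro x hx
    have : M1 p q x = nf p q x ^ 2 / ‖x‖ ^ 2 := by rw [nf_sq, M1]; ring
    rw [this, abs_of_nonneg (by positivity)]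
  have h5 : ∀ x, x ≠ 0 → (1 + ‖x‖) ^ 5 * |M1 p q x| ≤ 32 * C ^ 2 + D ^ 2 := by
    intro x hx
    have hx' : 0 < ‖x‖ := norm_pos_iff.mpr hx
    have hn := nf_nonneg p q x
    rw [hM x hx]
    rcases le_total ‖x‖ 1 with hle | hle
    · calc _ = (1 + ‖x‖) ^ 5 * (nf p q x / ‖x‖) ^ 2 := by rw [div_pow]
        _ ≤ (1 + 1) ^ 5 * C ^ 2 := by
          have := h x hx
          gcongr
        _ ≤ _ := by nlinarith
    · have h1 : nf p q x ≤ D := by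
        refine le_trans ?_ (hD' x)
        exact le_mul_of_one_le_left hn (one_le_pow₀ (by linarith))
      calc _ ≤ (1 + ‖x‖) ^ 5 * (nf p q x ^ 2) := by
            gcongr
            exact div_le_self (by positivity) (one_le_pow₀ hle)
        _ = ((1 + ‖x‖) ^ 5 * nf p q x) * nf p q x := by ring
        _ ≤ D * D := by
          have := hD' x
          gcongr
        _ ≤ _ := by nlinarith
  have hS : ∀ j, P j ≤ ∑ i, P i := fun j => Finset.single_le_sum (f := P) (fun i _ => hP i) (Finset.mem_univ j)
  have hS' : ∀ j, Q j ≤ ∑ i, Q i := fun j => Finset.single_le_sum (f := Q) (fun i _ => hQ i) (Finset.mem_univ j)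
  have hSn : 0 ≤ ∑ i, P i := Finset.sum_nonneg fun i _ => hP i
  have hSn' : 0 ≤ ∑ i, Q i := Finset.sum_nonneg fun i _ => hQ i
  refine ⟨2 * C * (∑ i, P i + ∑ i, Q i) + 2 * (32 * C ^ 2 + D ^ 2), by positivity, ?_, ?_⟩
  · intro x hx
    have := h5 x hx
    have : 0 ≤ 2 * C * (∑ i, P i + ∑ i, Q i) := by positivity
    nlinarith
  · intro j x hx
    have hx' : 0 < ‖x‖ := norm_pos_iff.mpr hx
    have hn := nf_nonneg p q x
    rw [(HP.M1 hp hq j hx).2]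
    have t : ‖x‖ * |2 * (p x * pdR j p x + q x * pdR j q x) / ‖x‖ ^ 2
      - 2 * x j * (p x ^ 2 + q x ^ 2) / (‖x‖ ^ 2) ^ 2| ≤
        2 * (nf p q x / ‖x‖) * (|pdR j p x| + |pdR j q x|) + 2 * |M1 p q x| := by
      rw [hM x hx]
      have t1 : |2 * (p x * pdR j p x + q x * pdR j q x) / ‖x‖ ^ 2| ≤
          2 * (nf p q x * (|pdR j p x| + |pdR j q x|)) / ‖x‖ ^ 2 := by
        rw [abs_div, abs_mul, abs_of_pos (by positivity : 0 < ‖x‖ ^ 2), abs_two]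
        gcongr
        exact abs_pq _ _ _ _ _ (nf_p p q x) (nf_q p q x)
      have t2 : |2 * x j * (p x ^ 2 + q x ^ 2) / (‖x‖ ^ 2) ^ 2| ≤
          2 * ‖x‖ * nf p q x ^ 2 / (‖x‖ ^ 2) ^ 2 := by
        rw [← nf_sq, abs_div, abs_mul, abs_mul, abs_of_pos (by positivity : 0 < (‖x‖ ^ 2) ^ 2), abs_two,
          abs_of_nonneg (by positivity : 0 ≤ nf p q x ^ 2)]
        have := abs_coord_le x j
        gcongr
      calc _ ≤ ‖x‖ * (2 * (nf p q x * (|pdR j p x| + |pdR j q x|)) / ‖x‖ ^ 2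
            + 2 * ‖x‖ * nf p q x ^ 2 / (‖x‖ ^ 2) ^ 2) := by
            gcongr
            exact (abs_sub _ _).trans (add_le_add t1 t2)
        _ = _ := by field_simp
    have hM4 : (1 + ‖x‖) ^ 4 * |M1 p q x| ≤ 32 * C ^ 2 + D ^ 2 := by
      refine le_trans ?_ (h5 x hx)
      gcongr
      · linarith
      · norm_num
    calc _ ≤ (1 + ‖x‖) ^ 4 * (2 * (nf p q x / ‖x‖) * (|pdR j p x| + |pdR j q x|) + 2 * |M1 p q x|) := by
          gcongr
      _ = 2 * (nf p q x / ‖x‖) * ((1 + ‖x‖) ^ 4 * |pdR j p x| + (1 + ‖x‖) ^ 4 * |pdR j q x|)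
          + 2 * ((1 + ‖x‖) ^ 4 * |M1 p q x|) := by ring
      _ ≤ _ := by
        have := h x hx
        have := (hP' j x).trans (hS j)
        have := (hQ' j x).trans (hS' j)
        gcongr

lemma M2_bounds (b : ℝ) (hb0 : 0 < b) (hb1 : b < 1) {p q : E3 → ℝ} (hp : IsS p) (hq : IsS q)
    (C : ℝ) (hC : 0 ≤ C) (h : ∀ x, x ≠ 0 → ‖x‖ ^ (-b) * nf p q x ^ 3 ≤ C) :
    ∃ K, 0 ≤ K ∧ (∀ x, x ≠ 0 → (1 + ‖x‖) ^ 5 * |M2 b p q x| ≤ K) ∧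
      ∀ j, ∀ x, x ≠ 0 → (1 + ‖x‖) ^ 4 * (‖x‖ * |pdR j (M2 b p q) x|) ≤ K := by
  obtain ⟨D, hD, hD'⟩ := nf_bound hp hq 5
  choose P hP hP' using fun j => (hp.pdR j).bound 5
  choose Q hQ hQ' using fun j => (hq.pdR j).bound 5
  have hM : ∀ x, |M2 b p q x| = (‖x‖ ^ (-b) * nf p q x ^ 3) * nf p q x := by
    intro x
    have hn := nf_nonneg p q x
    have : M2 b p q x = (‖x‖ ^ (-b) * nf p q x ^ 3) * nf p q x := by
      have e := nf_sq p q x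
      rw [M2, pow_norm_eq]
      linear_combination (‖x‖ ^ (-b) * -(nf p q x ^ 2 + (p x ^ 2 + q x ^ 2))) * e
    rw [this, abs_of_nonneg (by positivity)]
  have h5 : ∀ x, x ≠ 0 → (1 + ‖x‖) ^ 5 * |M2 b p q x| ≤ C * D := by
    intro x hx
    have hn := nf_nonneg p q x
    rw [hM x]
    calc _ = (‖x‖ ^ (-b) * nf p q x ^ 3) * ((1 + ‖x‖) ^ 5 * nf p q x) := by ring
      _ ≤ _ := by
        have := h x hx
        have := hD' x
        gcongr
  have hS : ∀ j, P j ≤ ∑ i, P i := fun j => Finset.single_le_sum (f := P) (fun i _ => hP i) (Finset.mem_univ j)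
  have hS' : ∀ j, Q j ≤ ∑ i, Q i := fun j => Finset.single_le_sum (f := Q) (fun i _ => hQ i) (Finset.mem_univ j)
  have hSn : 0 ≤ ∑ i, P i := Finset.sum_nonneg fun i _ => hP i
  have hSn' : 0 ≤ ∑ i, Q i := Finset.sum_nonneg fun i _ => hQ i
  refine ⟨4 * C * (∑ i, P i + ∑ i, Q i) + C * D, by positivity, ?_, ?_⟩
  · intro x hx
    have := h5 x hx
    have : 0 ≤ 4 * C * (∑ i, P i + ∑ i, Q i) := by positivity
    nlinarith
  · intro j x hx
    have hx' : 0 < ‖x‖ := norm_pos_iff.mpr hx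
    have hn := nf_nonneg p q x
    rw [(HP.M2 b hp hq j hx).2]
    have t : ‖x‖ * |‖x‖ ^ (-b) * (4 * (p x ^ 2 + q x ^ 2) * (p x * pdR j p x + q x * pdR j q x))
      - b * x j / ‖x‖ ^ 2 * (‖x‖ ^ (-b) * (p x ^ 2 + q x ^ 2) ^ 2)| ≤
        4 * (‖x‖ ^ (-b) * nf p q x ^ 3) * (‖x‖ * |pdR j p x| + ‖x‖ * |pdR j q x|) + |M2 b p q x| := by
      rw [hM x]
      have hV : 0 ≤ ‖x‖ ^ (-b) := by positivity
      have t1 : |‖x‖ ^ (-b) * (4 * (p x ^ 2 + q x ^ 2) * (p x * pdR j p x + q x * pdR j q x))| ≤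
          ‖x‖ ^ (-b) * (4 * nf p q x ^ 2 * (nf p q x * (|pdR j p x| + |pdR j q x|))) := by
        rw [← nf_sq, abs_mul, abs_mul, abs_of_nonneg hV,
          abs_of_nonneg (by positivity : 0 ≤ 4 * nf p q x ^ 2)]
        gcongr
        exact abs_pq _ _ _ _ _ (nf_p p q x) (nf_q p q x)
      have t2 : |b * x j / ‖x‖ ^ 2 * (‖x‖ ^ (-b) * (p x ^ 2 + q x ^ 2) ^ 2)| ≤
          1 * ‖x‖ / ‖x‖ ^ 2 * (‖x‖ ^ (-b) * (nf p q x ^ 2) ^ 2) := by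
        rw [← nf_sq, abs_mul, abs_div, abs_mul, abs_of_pos (by positivity : 0 < ‖x‖ ^ 2),
          abs_of_nonneg (by positivity : 0 ≤ ‖x‖ ^ (-b) * (nf p q x ^ 2) ^ 2), abs_of_pos hb0]
        have := abs_coord_le x j
        gcongr
      calc _ ≤ ‖x‖ * (‖x‖ ^ (-b) * (4 * nf p q x ^ 2 * (nf p q x * (|pdR j p x| + |pdR j q x|)))
            + 1 * ‖x‖ / ‖x‖ ^ 2 * (‖x‖ ^ (-b) * (nf p q x ^ 2) ^ 2)) := by
            gcongr
            exact (abs_sub _ _).trans (add_le_add t1 t2)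
        _ = _ := by field_simp
    have hM4 : (1 + ‖x‖) ^ 4 * |M2 b p q x| ≤ C * D := by
      refine le_trans ?_ (h5 x hx)
      gcongr
      · linarith
      · norm_num
    calc _ ≤ (1 + ‖x‖) ^ 4 * (4 * (‖x‖ ^ (-b) * nf p q x ^ 3) *
            ((1 + ‖x‖) * |pdR j p x| + (1 + ‖x‖) * |pdR j q x|) + |M2 b p q x|) := by
          refine mul_le_mul_of_nonneg_left (t.trans ?_) (by positivity)
          have : ‖x‖ ≤ 1 + ‖x‖ := by linarith
          gcongr
      _ = 4 * (‖x‖ ^ (-b) * nf p q x ^ 3) * ((1 + ‖x‖) ^ 5 * |pdR j p x| + (1 + ‖x‖) ^ 5 * |pdR j q x|)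
          + ((1 + ‖x‖) ^ 4 * |M2 b p q x|) := by ring
      _ ≤ _ := by
        have := h x hx
        have := (hP' j x).trans (hS j)
        have := (hQ' j x).trans (hS' j)
        gcongr

lemma M1_tendsto {p q : E3 → ℝ} (h : Tendsto (fun x => nf p q x / ‖x‖) (𝓝[≠] 0) (𝓝 0)) :
    Tendsto (M1 p q) (𝓝[≠] 0) (𝓝 0) := by
  have := h.mul h
  rw [mul_zero] at this
  refine this.congr fun x => ?_
  have e := nf_sq p q x
  rw [M1, show p x * p x + q x * q x = nf p q x ^ 2 by rw [e]; ring]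
  ring

lemma M2_tendsto (b C : ℝ) {p q : E3 → ℝ} (h : ∀ x, x ≠ 0 → ‖x‖ ^ (-b) * nf p q x ^ 3 ≤ C)
    (h' : Tendsto (nf p q) (𝓝[≠] 0) (𝓝 0)) :
    Tendsto (M2 b p q) (𝓝[≠] 0) (𝓝 0) := by
  have h2 := h'.const_mul C
  rw [mul_zero] at h2
  have hM : ∀ x, M2 b p q x = (‖x‖ ^ (-b) * nf p q x ^ 3) * nf p q x := by
    intro x
    have e := nf_sq p q x
    rw [M2, pow_norm_eq]
    linear_combination (‖x‖ ^ (-b) * -(nf p q x ^ 2 + (p x ^ 2 + q x ^ 2))) * e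
  refine tendsto_of_tendsto_of_tendsto_of_le_of_le' tendsto_const_nhds h2
    (Eventually.of_forall fun x => ?_) ?_
  · rw [hM]
    have := nf_nonneg p q x
    positivity
  · filter_upwards [self_mem_nhdsWithin] with x hx
    rw [hM]
    exact mul_le_mul_of_nonneg_right (h x hx) (nf_nonneg p q x)

/-! ### The key spatial inequality -/

lemma alg_hess (x0 x1 x2 p0 p1 p2 r s : ℝ) (hr : 0 < r)
    (h : r ^ 2 * (1 + s ^ 2 * (x0 * x0 + x1 * x1 + x2 * x2)) = 1) :
    r ^ 3 * (p0 * p0 + p1 * p1 + p2 * p2) ≤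
      r * (p0 * p0 + p1 * p1 + p2 * p2) - s ^ 2 * r ^ 3 * (x0 * p0 + x1 * p1 + x2 * p2) ^ 2 := by
  have cs : (x0 * p0 + x1 * p1 + x2 * p2) ^ 2 ≤
      (x0 * x0 + x1 * x1 + x2 * x2) * (p0 * p0 + p1 * p1 + p2 * p2) := by
    nlinarith [sq_nonneg (x0 * p1 - x1 * p0), sq_nonneg (x0 * p2 - x2 * p0),
      sq_nonneg (x1 * p2 - x2 * p1)]
  have h2 := mul_le_mul_of_nonneg_left cs (by positivity : 0 ≤ s ^ 2 * r ^ 3)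
  have h3 : r * (p0 * p0 + p1 * p1 + p2 * p2) = r ^ 3 * (p0 * p0 + p1 * p1 + p2 * p2) +
      s ^ 2 * r ^ 3 * ((x0 * x0 + x1 * x1 + x2 * x2) * (p0 * p0 + p1 * p1 + p2 * p2)) := by
    linear_combination (-r * (p0 * p0 + p1 * p1 + p2 * p2)) * h
  linarith

lemma alg_hardy (x0 x1 x2 p0 p1 p2 p r2 : ℝ) (hr2 : 0 < r2)
    (h : r2 = x0 * x0 + x1 * x1 + x2 * x2) :
    0 ≤ (p0 * p0 + p1 * p1 + p2 * p2) + p * (x0 * p0 + x1 * p1 + x2 * p2) / r2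
      + p ^ 2 / (4 * r2) := by
  have e : (p0 * p0 + p1 * p1 + p2 * p2) + p * (x0 * p0 + x1 * p1 + x2 * p2) / r2
      + p ^ 2 / (4 * r2) = (p0 + p * x0 / (2 * r2)) ^ 2 + (p1 + p * x1 / (2 * r2)) ^ 2
        + (p2 + p * x2 / (2 * r2)) ^ 2 := by
    field_simp
    rw [h]; ring
  rw [e]; positivity

lemma alg_young (x0 x1 x2 p0 p1 p2 p r s : ℝ) (hr : 0 < r) (hr1 : r ≤ 1) (hs : 0 < s)
    (h : r ^ 2 * (1 + s ^ 2 * (x0 * x0 + x1 * x1 + x2 * x2)) = 1) :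
    (2 * r ^ 3 + 3 * r ^ 5) * s ^ 2 * (p * (x0 * p0 + x1 * p1 + x2 * p2)) ≤
      5 / 2 * s * (p ^ 2 + (p0 * p0 + p1 * p1 + p2 * p2)) := by
  set G := p0 * p0 + p1 * p1 + p2 * p2 with hG
  set z := x0 * p0 + x1 * p1 + x2 * p2 with hz
  have hG0 : 0 ≤ G := by rw [hG]; nlinarith [sq_nonneg p0, sq_nonneg p1, sq_nonneg p2]
  have cs : z ^ 2 ≤ (x0 * x0 + x1 * x1 + x2 * x2) * G := by
    rw [hz, hG]
    nlinarith [sq_nonneg (x0 * p1 - x1 * p0), sq_nonneg (x0 * p2 - x2 * p0),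
      sq_nonneg (x1 * p2 - x2 * p1)]
  have h1 : (r * s * z) ^ 2 ≤ G := by
    have h2 := mul_le_mul_of_nonneg_left cs (by positivity : 0 ≤ r ^ 2 * s ^ 2)
    nlinarith [mul_nonneg (sq_nonneg r) hG0]
  have h3 : |p * (r * s * z)| ≤ (p ^ 2 + G) / 2 := by
    rw [abs_le]
    constructor <;> nlinarith [sq_nonneg (p + r * s * z), sq_nonneg (p - r * s * z)]
  have h4 : 0 ≤ 2 * r ^ 2 + 3 * r ^ 4 := by positivity
  have h5 : 2 * r ^ 2 + 3 * r ^ 4 ≤ 5 := by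
    have : r ^ 2 ≤ 1 := pow_le_one₀ hr.le hr1
    have : r ^ 4 ≤ 1 := pow_le_one₀ hr.le hr1
    linarith
  calc (2 * r ^ 3 + 3 * r ^ 5) * s ^ 2 * (p * z)
      = (2 * r ^ 2 + 3 * r ^ 4) * s * (p * (r * s * z)) := by ring
    _ ≤ (2 * r ^ 2 + 3 * r ^ 4) * s * ((p ^ 2 + G) / 2) := by
        gcongr; exact (le_abs_self _).trans h3
    _ ≤ 5 * s * ((p ^ 2 + G) / 2) := by gcongr
    _ = _ := by ring

lemma alg_pot (N r2 r s a k : ℝ) (hN : 0 ≤ N) (hr2 : 0 < r2) (hr : 0 < r) (hr1 : r ≤ 1)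
    (hs : 0 < s) (hs1 : s ≤ 1) (h : r ^ 2 * (1 + s ^ 2 * r2) = 1)
    (hk : (k = 0 ∧ 0 ≤ a) ∨ (k = 1 ∧ -(1 / 4) ≤ a)) :
    -(7 / 2 * s * N) ≤ 2 * a * r * N / r2 + k * r ^ 3 * (N / (2 * r2)) - 3 * k * s ^ 2 * r ^ 5 * N := by
  rcases hk with ⟨rfl, ha⟩ | ⟨rfl, ha⟩
  · have : 0 ≤ 2 * a * r * N / r2 := by positivity
    have : 0 ≤ s * N := by positivity
    linarith
  · have h1 : -(1 / 2) * (r * N / r2) ≤ 2 * a * r * N / r2 := by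
      have : 0 ≤ r * N / r2 := by positivity
      have e : 2 * a * r * N / r2 = 2 * a * (r * N / r2) := by ring
      rw [e]; nlinarith
    have h2 : r ^ 3 * (N / (2 * r2)) = 1 / 2 * (r * N / r2) - 1 / 2 * (s ^ 2 * r ^ 3 * N) := by
      field_simp
      linear_combination N * h
    have h3 : s ^ 2 * r ^ 3 * N ≤ s * N := by
      have : r ^ 3 ≤ 1 := pow_le_one₀ hr.le hr1
      calc s ^ 2 * r ^ 3 * N ≤ (s * 1) * 1 * N := by rw [sq]; gcongr
        _ = s * N := by ring
    have h4 : s ^ 2 * r ^ 5 * N ≤ s * N := by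
      have : r ^ 5 ≤ 1 := pow_le_one₀ hr.le hr1
      calc s ^ 2 * r ^ 5 * N ≤ (s * 1) * 1 * N := by rw [sq]; gcongr
        _ = s * N := by ring
    linarith

lemma div_cM {c M : E3 → ℝ} {x : E3} {c' M' : Fin 3 → ℝ} (hc : ∀ j, HP j c (c' j) x)
    (hM : ∀ j, HP j M (M' j) x) :
    ∑ j, pdR j (fun y => c y * M y * y j) x =
      3 * (c x * M x) + c x * (x 0 * M' 0 + x 1 * M' 1 + x 2 * M' 2)
        + M x * (x 0 * c' 0 + x 1 * c' 1 + x 2 * c' 2) := by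
  have hb : ∀ j, HP j (fun y => c y * M y * y j) _ x := fun j => ((hc j).mul (hM j)).mul HP.coord
  rw [Fin.sum_univ_three, (hb 0).2, (hb 1).2, (hb 2).2]
  simp only [if_true]
  ring

lemma alg_fin (a b k s : ℝ) : ∀ r2 V r N G1 G2 H1 H2 Y D : ℝ, 0 < r2 →
      r * G1 - s ^ 2 * r ^ 3 * H1 ≥ r ^ 3 * G1 → r * G2 - s ^ 2 * r ^ 3 * H2 ≥ r ^ 3 * G2 →
      0 ≤ 2 * r ^ 3 * (G1 + G2) + k * r ^ 3 * (2 * Y / r2 + N / (2 * r2)) →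
      (2 * r ^ 3 + 3 * r ^ 5) * s ^ 2 * Y ≤ 5 / 2 * s * (N + (G1 + G2)) →
      -(7 / 2 * s * N) ≤ 2 * a * r * N / r2 + k * r ^ 3 * (N / (2 * r2)) - 3 * k * s ^ 2 * r ^ 5 * N →
      0 ≤ s * (G1 + G2) →
      D + (3 * ((a * r + -k * (r * (r * r))) * (N / r2))
          + (a * r + -k * (r * (r * r))) * (2 * Y / r2 - 2 * (N / r2))
          + N / r2 * (-s ^ 2 * r2 * (a * r ^ 3 + 3 * -k * r ^ 5)))
        + (3 * ((1 / 2 * r + 0 * (r * (r * r))) * (V * N ^ 2))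
          + (1 / 2 * r + 0 * (r * (r * r))) * (V * (4 * N) * Y - b * (V * N ^ 2))
          + V * N ^ 2 * (-s ^ 2 * r2 * (1 / 2 * r ^ 3 + 3 * 0 * r ^ 5)))
        + 1 / 2 * (V * N ^ 2 * (3 * r - s ^ 2 * r ^ 3 * r2 + b * r))
        - 6 * s * (N + (G1 + G2)) ≤
      D + (a / r2 + V * N) * ((3 * r - s ^ 2 * r ^ 3 * r2) * N + 2 * (r * Y))
        + 2 * (r * G1 - s ^ 2 * r ^ 3 * H1 + (r * G2 - s ^ 2 * r ^ 3 * H2))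
        - (2 * r ^ 3 + 3 * r ^ 5) * s ^ 2 * Y := by
    intro r2 V r N G1 G2 H1 H2 Y D hr2 i1 i2 i3 i4 i5 i6
    have e : (a / r2 + V * N) * ((3 * r - s ^ 2 * r ^ 3 * r2) * N + 2 * (r * Y)) =
        (3 * ((a * r + -k * (r * (r * r))) * (N / r2))
          + (a * r + -k * (r * (r * r))) * (2 * Y / r2 - 2 * (N / r2))
          + N / r2 * (-s ^ 2 * r2 * (a * r ^ 3 + 3 * -k * r ^ 5)))
        + (3 * ((1 / 2 * r + 0 * (r * (r * r))) * (V * N ^ 2))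
          + (1 / 2 * r + 0 * (r * (r * r))) * (V * (4 * N) * Y - b * (V * N ^ 2))
          + V * N ^ 2 * (-s ^ 2 * r2 * (1 / 2 * r ^ 3 + 3 * 0 * r ^ 5)))
        + 1 / 2 * (V * N ^ 2 * (3 * r - s ^ 2 * r ^ 3 * r2 + b * r))
        + (2 * a * r * N / r2 + k * r ^ 3 * (N / (2 * r2)) - 3 * k * s ^ 2 * r ^ 5 * N)
        + k * r ^ 3 * (2 * Y / r2 + N / (2 * r2)) := by
      field_simp
      ring
    rw [e]
    linarith

lemma gsq_nonneg (p : E3 → ℝ) (x : E3) : 0 ≤ gsq p x := by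
  unfold gsq
  exact add_nonneg (add_nonneg (mul_self_nonneg _) (mul_self_nonneg _)) (mul_self_nonneg _)

set_option maxHeartbeats 1000000 in
lemma pointwise {p q gr gi : E3 → ℝ} (hp : IsS p) (hq : IsS q) (hgr : IsS gr) (hgi : IsS gi)
    (a b k s : ℝ) (hb0 : 0 < b) (hs : 0 < s) (hs1 : s ≤ 1)
    (hk : (k = 0 ∧ 0 ≤ a) ∨ (k = 1 ∧ -(1 / 4) ≤ a)) (x : E3) (hx : x ≠ 0)
    (h1 : gr x = - (lapR q x - (a / ‖x‖ ^ 2 + ‖x‖ ^ (-b) * (p x ^ 2 + q x ^ 2)) * q x))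
    (h2 : gi x = lapR p x - (a / ‖x‖ ^ 2 + ‖x‖ ^ (-b) * (p x ^ 2 + q x ^ 2)) * p x) :
    ∑ j, pdR j (Af s p q gr gi j) x + ∑ j, pdR j (fun y => cf s a (-k) y * M1 p q y * y j) x
      + ∑ j, pdR j (fun y => cf s (1 / 2) 0 y * M2 b p q y * y j) x
      + 1 / 2 * (M2 b p q x * (Df s x + b * rho s x))
      - 6 * s * (p x ^ 2 + q x ^ 2 + (gsq p x + gsq q x)) ≤ Idens s p q gr gi x := by
  rw [Idens_eq hp hq hgr hgi s x _ h1 h2]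
  rw [div_cM (fun j => HP.cf) (fun j => HP.M1 hp hq j hx),
    div_cM (fun j => HP.cf) (fun j => HP.M2 b hp hq j hx)]
  have hr2 : 0 < ‖x‖ ^ 2 := by have := norm_pos_iff.mpr hx; positivity
  have hn := nsq x
  have hr := rho_pos s x
  have hr1 := rho_le_one s x
  have hrs := rho_sq s x
  have hrs' := hrs
  rw [hn] at hrs'
  have hD := Df_eq s x
  have a1 := alg_hess (x 0) (x 1) (x 2) (pdR 0 p x) (pdR 1 p x) (pdR 2 p x) _ s hr hrs'
  have a2 := alg_hess (x 0) (x 1) (x 2) (pdR 0 q x) (pdR 1 q x) (pdR 2 q x) _ s hr hrs'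
  have b1 := alg_hardy (x 0) (x 1) (x 2) (pdR 0 p x) (pdR 1 p x) (pdR 2 p x) (p x) _ hr2 hn
  have b2 := alg_hardy (x 0) (x 1) (x 2) (pdR 0 q x) (pdR 1 q x) (pdR 2 q x) (q x) _ hr2 hn
  have c1 := alg_young (x 0) (x 1) (x 2) (pdR 0 p x) (pdR 1 p x) (pdR 2 p x) (p x) _ s hr hr1 hs hrs'
  have c2 := alg_young (x 0) (x 1) (x 2) (pdR 0 q x) (pdR 1 q x) (pdR 2 q x) (q x) _ s hr hr1 hs hrs'
  have d1 := alg_pot (p x ^ 2 + q x ^ 2) _ _ s a k (by positivity) hr2 hr hr1 hs hs1 hrs hk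
  have hXp : Xd s p x = rho s x * (x 0 * pdR 0 p x + x 1 * pdR 1 p x + x 2 * pdR 2 p x) := by
    unfold Xd Xf; ring
  have hXq : Xd s q x = rho s x * (x 0 * pdR 0 q x + x 1 * pdR 1 q x + x 2 * pdR 2 q x) := by
    unfold Xd Xf; ring
  rw [hXp, hXq]
  have hM2 : M2 b p q x = ‖x‖ ^ (-b) * (p x ^ 2 + q x ^ 2) ^ 2 := by
    rw [M2, pow_norm_eq]; ring
  have hM1 : M1 p q x = (p x ^ 2 + q x ^ 2) / ‖x‖ ^ 2 := by
    rw [M1]; ring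
  rw [hM2, hM1]
  unfold cf hessq
  rw [← gsq] at a1 b1 c1
  rw [← gsq] at a2 b2 c2
  set Yp := x 0 * pdR 0 p x + x 1 * pdR 1 p x + x 2 * pdR 2 p x with hYp
  set Yq := x 0 * pdR 0 q x + x 1 * pdR 1 q x + x 2 * pdR 2 q x with hYq
  have e1 : x 0 * (2 * (p x * pdR 0 p x + q x * pdR 0 q x) / ‖x‖ ^ 2
        - 2 * x 0 * (p x ^ 2 + q x ^ 2) / (‖x‖ ^ 2) ^ 2)
      + x 1 * (2 * (p x * pdR 1 p x + q x * pdR 1 q x) / ‖x‖ ^ 2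
        - 2 * x 1 * (p x ^ 2 + q x ^ 2) / (‖x‖ ^ 2) ^ 2)
      + x 2 * (2 * (p x * pdR 2 p x + q x * pdR 2 q x) / ‖x‖ ^ 2
        - 2 * x 2 * (p x ^ 2 + q x ^ 2) / (‖x‖ ^ 2) ^ 2)
      = 2 * (p x * Yp + q x * Yq) / ‖x‖ ^ 2 - 2 * ((p x ^ 2 + q x ^ 2) / ‖x‖ ^ 2) := by
    rw [hYp, hYq]
    generalize ‖x‖ ^ 2 = r2 at hr2 hn
    field_simp
    rw [hn]; ring
  have e2 : x 0 * (‖x‖ ^ (-b) * (4 * (p x ^ 2 + q x ^ 2) * (p x * pdR 0 p x + q x * pdR 0 q x))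
      - b * x 0 / ‖x‖ ^ 2 * (‖x‖ ^ (-b) * (p x ^ 2 + q x ^ 2) ^ 2))
      + x 1 * (‖x‖ ^ (-b) * (4 * (p x ^ 2 + q x ^ 2) * (p x * pdR 1 p x + q x * pdR 1 q x))
      - b * x 1 / ‖x‖ ^ 2 * (‖x‖ ^ (-b) * (p x ^ 2 + q x ^ 2) ^ 2))
      + x 2 * (‖x‖ ^ (-b) * (4 * (p x ^ 2 + q x ^ 2) * (p x * pdR 2 p x + q x * pdR 2 q x))
      - b * x 2 / ‖x‖ ^ 2 * (‖x‖ ^ (-b) * (p x ^ 2 + q x ^ 2) ^ 2))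
      = ‖x‖ ^ (-b) * (4 * (p x ^ 2 + q x ^ 2)) * (p x * Yp + q x * Yq)
        - b * (‖x‖ ^ (-b) * (p x ^ 2 + q x ^ 2) ^ 2) := by
    rw [hYp, hYq]
    generalize ‖x‖ ^ 2 = r2 at hr2 hn
    generalize ‖x‖ ^ (-b) = V
    field_simp
    rw [hn]; ring
  rw [e1, e2]
  have e3 : ∀ c d : ℝ, x 0 * (-s ^ 2 * x 0 * (c * rho s x ^ 3 + 3 * d * rho s x ^ 5))
      + x 1 * (-s ^ 2 * x 1 * (c * rho s x ^ 3 + 3 * d * rho s x ^ 5))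
      + x 2 * (-s ^ 2 * x 2 * (c * rho s x ^ 3 + 3 * d * rho s x ^ 5))
      = -s ^ 2 * ‖x‖ ^ 2 * (c * rho s x ^ 3 + 3 * d * rho s x ^ 5) := by
    intro c d; rw [hn]; ring
  rw [e3, e3, hD]
  have hardy : 0 ≤ 2 * rho s x ^ 3 * (gsq p x + gsq q x)
      + k * rho s x ^ 3 * (2 * (p x * Yp + q x * Yq) / ‖x‖ ^ 2
        + (p x ^ 2 + q x ^ 2) / (2 * ‖x‖ ^ 2)) := by
    rcases hk with ⟨rfl, _⟩ | ⟨rfl, _⟩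
    · have g1 := gsq_nonneg p x
      have g2 := gsq_nonneg q x
      rw [zero_mul, zero_mul, add_zero]; positivity
    · have := mul_nonneg (by positivity : 0 ≤ 2 * rho s x ^ 3) (add_nonneg b1 b2)
      refine this.trans_eq ?_
      ring
  have hG : 0 ≤ s * (gsq p x + gsq q x) := mul_nonneg hs.le (add_nonneg (gsq_nonneg p x) (gsq_nonneg q x))
  have := alg_fin a b k s (‖x‖ ^ 2) (‖x‖ ^ (-b)) (rho s x) (p x ^ 2 + q x ^ 2) (gsq p x) (gsq q x) (Yp ^ 2) (Yq ^ 2)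
    (p x * Yp + q x * Yq) (∑ j, pdR j (Af s p q gr gi j) x) hr2 a1 a2 hardy (by linarith) d1 hG
  refine this.trans_eq ?_
  ring

/-! ### Integrating the pointwise inequality -/

lemma IsS.lapR {p : E3 → ℝ} (hp : IsS p) : IsS (lapR p) :=
  IsS.sum3 fun j => (hp.pdR j).pdR j

lemma weight_ball (s b : ℝ) (hs : 0 < s) (hb0 : 0 < b) (x : E3) (hx : ‖x‖ ≤ 1 / s) :
    1 ≤ Df s x + b * rho s x := by
  have h0 := rho_pos s x
  have h := rho_sq s x
  have h1 : s ^ 2 * ‖x‖ ^ 2 ≤ 1 := by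
    rw [← mul_pow]
    refine pow_le_one₀ (by positivity) ?_
    rw [le_div_iff₀ hs] at hx
    linarith
  have h2 : 1 ≤ 2 * rho s x ^ 2 := by nlinarith [sq_nonneg (rho s x)]
  have h3 : 1 ≤ 2 * rho s x := by
    by_contra hc
    push Not at hc
    nlinarith
  have h4 : 0 < rho s x * (rho s x * rho s x) := by positivity
  have h5 : 0 < b * rho s x := by positivity
  unfold Df
  linarith

lemma M2_nonneg (b : ℝ) (p q : E3 → ℝ) (x : E3) : 0 ≤ M2 b p q x := by
  unfold M2
  exact mul_nonneg (by positivity) (mul_self_nonneg _)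

lemma M2_meas (b : ℝ) {p q : E3 → ℝ} (hp : IsS p) (hq : IsS q) : Measurable (M2 b p q) := by
  have h1 := hp.diff.continuous.measurable
  have h2 := hq.diff.continuous.measurable
  unfold M2
  fun_prop

lemma key_ineq {p q gr gi : E3 → ℝ} (hp : IsS p) (hq : IsS q) (hgr : IsS gr) (hgi : IsS gi)
    (a b s : ℝ) (ha : -(1 / 4) < a) (hb0 : 0 < b) (hb1 : b < 1) (hs : 0 < s) (hs1 : s ≤ 1)
    (h1 : ∀ x, x ≠ 0 →
      gr x = - (lapR q x - (a / ‖x‖ ^ 2 + ‖x‖ ^ (-b) * (p x ^ 2 + q x ^ 2)) * q x))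
    (h2 : ∀ x, x ≠ 0 →
      gi x = lapR p x - (a / ‖x‖ ^ 2 + ‖x‖ ^ (-b) * (p x ^ 2 + q x ^ 2)) * p x) :
    1 / 2 * (∫ x in Metric.closedBall (0 : E3) (1 / s), M2 b p q x)
      - 6 * s * (∫ x, (p x ^ 2 + q x ^ 2 + (gsq p x + gsq q x))) ≤ ∫ x, Idens s p q gr gi x := by
  obtain ⟨k, hk, hk0⟩ : ∃ k : ℝ, ((k = 0 ∧ 0 ≤ a) ∨ (k = 1 ∧ -(1 / 4) ≤ a)) ∧ (a = 0 → k = 0) := by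
    by_cases h : 0 ≤ a
    · exact ⟨0, Or.inl ⟨rfl, h⟩, fun _ => rfl⟩
    · exact ⟨1, Or.inr ⟨rfl, ha.le⟩, fun h' => absurd h'.ge h⟩
  -- bounds
  obtain ⟨Kn, hKn, hKn'⟩ := nf_bound hp hq 0
  obtain ⟨K1, hK1, hK1'⟩ := (hp.lapR.sub hgi).bound 0
  obtain ⟨K2, hK2, hK2'⟩ := (hq.lapR.add hgr).bound 0
  simp only [pow_zero, one_mul] at hKn' hK1' hK2'
  obtain ⟨⟨C3, hC3, hC3'⟩, hn0, hna⟩ := sing_bounds a b hb0 hb1 (nf p q) (nf_nonneg p q)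
    (Kn + (K1 + K2)) (by positivity) (fun x => (hKn' x).trans (by linarith)) (by
      intro x hx
      rw [nf_sq]
      set W := a / ‖x‖ ^ 2 + ‖x‖ ^ (-b) * (p x ^ 2 + q x ^ 2) with hW
      have e1 : W * p x = lapR p x - gi x := by rw [h2 x hx]; ring
      have e2 : W * q x = lapR q x + gr x := by rw [h1 x hx]; ring
      calc |W| * nf p q x ≤ |W| * (|p x| + |q x|) := by
            gcongr; exact nf_le p q x
        _ = |lapR p x - gi x| + |lapR q x + gr x| := by
            rw [← e1, ← e2, abs_mul, abs_mul]; ring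
        _ ≤ _ := by linarith [hK1' x, hK2' x])
  have hB1 : ∀ j, Differentiable ℝ (fun y => cf s a (-k) y * M1 p q y * y j) ∧
      Integrable (fun y => cf s a (-k) y * M1 p q y * y j) ∧
      Integrable (pdR j (fun y => cf s a (-k) y * M1 p q y * y j)) := by
    intro j
    by_cases h : a = 0
    · have hz : (fun y : E3 => cf s a (-k) y * M1 p q y * y j) = fun _ => 0 := by
        funext y
        simp [cf, h, hk0 h]
      rw [hz]
      refine ⟨by fun_prop, by simp, ?_⟩
      have : pdR j (fun _ : E3 => (0 : ℝ)) = fun _ => 0 := by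
        funext y
        exact (HP.const (j := j) (x := y) 0).2
      rw [this]; simp
    · obtain ⟨⟨C, hC, hC'⟩, ht⟩ := hna h
      obtain ⟨K, hK, hK5, hKj⟩ := M1_bounds hp hq C hC hC'
      have hc := add_nonneg (abs_nonneg a) (mul_nonneg (by norm_num : (0 : ℝ) ≤ 3) (abs_nonneg (-k)))
      refine sing_current j _ _ (fun x => (HP.cf (j := j)).1) (K + (|a| + 3 * |(-k)|)) (by linarith)
        (fun x => (cf_bound _ _ _ _).trans (by linarith))
        (fun x => (cf_bound' _ _ _ _ _).trans (by linarith))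
        (fun x hx => (HP.M1 hp hq j hx).1) (fun x hx => (hK5 x hx).trans (by linarith))
        (fun x hx => (hKj j x hx).trans (by linarith)) (M1_tendsto ht)
  obtain ⟨K, hK, hK5, hKj⟩ := M2_bounds b hb0 hb1 hp hq C3 hC3 hC3'
  have hB2 : ∀ j, Differentiable ℝ (fun y => cf s (1 / 2) 0 y * M2 b p q y * y j) ∧
      Integrable (fun y => cf s (1 / 2) 0 y * M2 b p q y * y j) ∧
      Integrable (pdR j (fun y => cf s (1 / 2) 0 y * M2 b p q y * y j)) := by
    intro j
    have hc := add_nonneg (abs_nonneg (1 / 2 : ℝ))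
      (mul_nonneg (by norm_num : (0 : ℝ) ≤ 3) (abs_nonneg (0 : ℝ)))
    refine sing_current j _ _ (fun x => (HP.cf (j := j)).1)
        (K + (|(1 / 2 : ℝ)| + 3 * |(0 : ℝ)|)) (by linarith)
        (fun x => (cf_bound _ _ _ _).trans (by linarith))
        (fun x => (cf_bound' _ _ _ _ _).trans (by linarith))
        (fun x hx => (HP.M2 b hp hq j hx).1) (fun x hx => (hK5 x hx).trans (by linarith))
        (fun x hx => (hKj j x hx).trans (by linarith)) (M2_tendsto b C3 hC3' hn0)
  have hM2 : Integrable (M2 b p q) := by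
    refine integrable_of_rap (M2_meas b hp hq).aestronglyMeasurable (C := K) fun x hx => ?_
    refine le_trans ?_ (hK5 x hx)
    gcongr <;> first | norm_num | linarith [norm_nonneg x]
  have hM2i : Integrable (Set.indicator (Metric.closedBall (0 : E3) (1 / s)) (M2 b p q)) :=
    hM2.indicator measurableSet_closedBall
  have hI : Integrable (Idens s p q gr gi) :=
    ((((hgr.mul (hq.Xd s)).sub (hgi.mul (hp.Xd s))).add (hp.mul (hgi.Xd s))).sub
      (hq.mul (hgr.Xd s))).integrable
  have hE : Integrable (fun x => p x ^ 2 + q x ^ 2 + (gsq p x + gsq q x)) := by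
    have := (((hp.mul hp).add (hq.mul hq)).add (hp.gsq.add hq.gsq)).integrable
    refine this.congr (Eventually.of_forall fun x => ?_)
    simp only [sq]
  have hA : ∀ j, Integrable (pdR j (Af s p q gr gi j)) := fun j =>
    ((IsS.Af hp hq hgr hgi s j).pdR j).integrable
  have i1 : Integrable (fun x => ∑ j, pdR j (Af s p q gr gi j) x) :=
    integrable_finsetSum _ fun j _ => hA j
  have i2 : Integrable (fun x => ∑ j, pdR j (fun y => cf s a (-k) y * M1 p q y * y j) x) :=
    integrable_finsetSum _ fun j _ => (hB1 j).2.2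
  have i3 : Integrable (fun x => ∑ j, pdR j (fun y => cf s (1 / 2) 0 y * M2 b p q y * y j) x) :=
    integrable_finsetSum _ fun j _ => (hB2 j).2.2
  have z1 : ∫ x, ∑ j, pdR j (Af s p q gr gi j) x = 0 := by
    rw [integral_finsetSum _ fun j _ => hA j]
    exact Finset.sum_eq_zero fun j _ =>
      integral_pdR_zero (IsS.Af hp hq hgr hgi s j).diff (IsS.Af hp hq hgr hgi s j).integrable (hA j)
  have z2 : ∫ x, ∑ j, pdR j (fun y => cf s a (-k) y * M1 p q y * y j) x = 0 := by
    rw [integral_finsetSum _ fun j _ => (hB1 j).2.2]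
    exact Finset.sum_eq_zero fun j _ =>
      integral_pdR_zero (hB1 j).1 (hB1 j).2.1 (hB1 j).2.2
  have z3 : ∫ x, ∑ j, pdR j (fun y => cf s (1 / 2) 0 y * M2 b p q y * y j) x = 0 := by
    rw [integral_finsetSum _ fun j _ => (hB2 j).2.2]
    exact Finset.sum_eq_zero fun j _ =>
      integral_pdR_zero (hB2 j).1 (hB2 j).2.1 (hB2 j).2.2
  have hpt : ∀ᵐ x : E3, (∑ j, pdR j (Af s p q gr gi j) x
      + ∑ j, pdR j (fun y => cf s a (-k) y * M1 p q y * y j) x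
      + ∑ j, pdR j (fun y => cf s (1 / 2) 0 y * M2 b p q y * y j) x)
      + 1 / 2 * (Set.indicator (Metric.closedBall (0 : E3) (1 / s)) (M2 b p q) x)
      - 6 * s * (p x ^ 2 + q x ^ 2 + (gsq p x + gsq q x)) ≤ Idens s p q gr gi x := by
    have hne : ∀ᵐ x : E3, x ≠ 0 := by
      simp [ae_iff, measure_singleton]
    filter_upwards [hne] with x hx
    have hmain := pointwise hp hq hgr hgi a b k s hb0 hs hs1 hk x hx (h1 x hx) (h2 x hx)
    have hind : Set.indicator (Metric.closedBall (0 : E3) (1 / s)) (M2 b p q) x ≤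
        M2 b p q x * (Df s x + b * rho s x) := by
      have hM := M2_nonneg b p q x
      by_cases hxb : x ∈ Metric.closedBall (0 : E3) (1 / s)
      · rw [Set.indicator_of_mem hxb]
        rw [mem_closedBall_zero_iff] at hxb
        exact le_mul_of_one_le_right hM (weight_ball s b hs hb0 x hxb)
      · rw [Set.indicator_of_notMem hxb]
        have := rho_pos s x
        unfold Df
        positivity
    linarith
  have hIntg := integral_mono_ae (((i1.add i2).add i3).add (hM2i.const_mul (1 / 2)) |>.sub
    (hE.const_mul (6 * s))) hI hpt
  refine le_trans (le_of_eq ?_) hIntg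
  have e := integral_sub' (((i1.add i2).add i3).add (hM2i.const_mul (1 / 2))) (hE.const_mul (6 * s))
  refine Eq.trans ?_ e.symm
  have e2 := integral_add' ((i1.add i2).add i3) (hM2i.const_mul (1 / 2))
  have e3 := integral_add' (i1.add i2) i3
  have e4 := integral_add' i1 i2
  rw [e2, e3, e4, z1, z2, z3, integral_const_mul, integral_const_mul,
    integral_indicator measurableSet_closedBall]
  ring

/-! ### The time-dependent part -/

/-- Time derivative. -/
def utd (u : ℝ → E3 → ℂ) (t : ℝ) (x : E3) : ℂ := deriv (fun s => u s x) t

/-- Real part. -/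
def rp (f : E3 → ℂ) (x : E3) : ℝ := (f x).re

/-- Imaginary part. -/
def ip (f : E3 → ℂ) (x : E3) : ℝ := (f x).im

lemma isS_rp {f : E3 → ℂ} (hf : ∃ F : SchwartzMap E3 ℂ, ∀ x, F x = f x) : IsS (rp f) := by
  obtain ⟨F, hF⟩ := hf
  exact ⟨F.postcompCLM Complex.reCLM, fun x => by rw [SchwartzMap.postcompCLM_apply, hF]; rfl⟩

lemma isS_ip {f : E3 → ℂ} (hf : ∃ F : SchwartzMap E3 ℂ, ∀ x, F x = f x) : IsS (ip f) := by
  obtain ⟨F, hF⟩ := hf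
  exact ⟨F.postcompCLM Complex.imCLM, fun x => by rw [SchwartzMap.postcompCLM_apply, hF]; rfl⟩

lemma smooth_of_S {f : E3 → ℂ} (hf : ∃ F : SchwartzMap E3 ℂ, ∀ x, F x = f x) :
    ContDiff ℝ (⊤ : ℕ∞) f := by
  obtain ⟨F, hF⟩ := hf
  obtain rfl : ⇑F = f := funext hF
  exact F.smooth _

lemma pdR_rp {f : E3 → ℂ} (j : Fin 3) (x : E3) (hf : DifferentiableAt ℝ f x) :
    pdR j (rp f) x = (pd j f x).re := by
  have h : HasFDerivAt (rp f) (Complex.reCLM.comp (fderiv ℝ f x)) x :=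
    Complex.reCLM.hasFDerivAt.comp x hf.hasFDerivAt
  rw [pdR, h.fderiv]; rfl

lemma pdR_ip {f : E3 → ℂ} (j : Fin 3) (x : E3) (hf : DifferentiableAt ℝ f x) :
    pdR j (ip f) x = (pd j f x).im := by
  have h : HasFDerivAt (ip f) (Complex.imCLM.comp (fderiv ℝ f x)) x :=
    Complex.imCLM.hasFDerivAt.comp x hf.hasFDerivAt
  rw [pdR, h.fderiv]; rfl

lemma pd_diff {f : E3 → ℂ} (hf : ContDiff ℝ (⊤ : ℕ∞) f) (j : Fin 3) :
    Differentiable ℝ (fun y => pd j f y) := by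
  have hd : Differentiable ℝ (fderiv ℝ f) :=
    (hf.fderiv_right (m := 1) (WithTop.coe_le_coe.mpr le_top)).differentiable (by simp)
  unfold pd
  fun_prop

lemma lap_rp {f : E3 → ℂ} (hf : ContDiff ℝ (⊤ : ℕ∞) f) (x : E3) :
    lapR (rp f) x = (lap f x).re := by
  have hd : Differentiable ℝ f := hf.differentiable (by simp)
  unfold lapR lap
  rw [Complex.re_sum]
  refine Finset.sum_congr rfl fun j _ => ?_
  have : (fun y => pdR j (rp f) y) = rp (fun y => pd j f y) :=
    funext fun y => pdR_rp j y (hd y)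
  rw [this, pdR_rp j x (pd_diff hf j x)]

lemma lap_ip {f : E3 → ℂ} (hf : ContDiff ℝ (⊤ : ℕ∞) f) (x : E3) :
    lapR (ip f) x = (lap f x).im := by
  have hd : Differentiable ℝ f := hf.differentiable (by simp)
  unfold lapR lap
  rw [Complex.im_sum]
  refine Finset.sum_congr rfl fun j _ => ?_
  have : (fun y => pdR j (ip f) y) = ip (fun y => pd j f y) :=
    funext fun y => pdR_ip j y (hd y)
  rw [this, pdR_ip j x (pd_diff hf j x)]

lemma norm_sq_ri (z : ℂ) : ‖z‖ ^ 2 = z.re ^ 2 + z.im ^ 2 := by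
  rw [← Complex.normSq_eq_norm_sq, Complex.normSq_apply]; ring

lemma eqn_gi {a b : ℝ} {u : ℝ → E3 → ℂ} (hu : IsSchwartzSolution a b 1 u) (t : ℝ) (x : E3)
    (hx : x ≠ 0) : ip (utd u t) x = lapR (rp (u t)) x
      - (a / ‖x‖ ^ 2 + ‖x‖ ^ (-b) * (rp (u t) x ^ 2 + ip (u t) x ^ 2)) * rp (u t) x := by
  have h := congrArg Complex.re (hu.eqn t x hx)
  rw [lap_rp (smooth_of_S (hu.schwartz t))]
  rw [norm_sq_ri] at h
  simp only [Complex.add_re, Complex.sub_re, Complex.mul_re, Complex.I_re, Complex.I_im,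
    Complex.ofReal_re, Complex.ofReal_im, Complex.mul_im] at h
  simp only [rp, ip, utd]
  linear_combination -h

lemma eqn_gr {a b : ℝ} {u : ℝ → E3 → ℂ} (hu : IsSchwartzSolution a b 1 u) (t : ℝ) (x : E3)
    (hx : x ≠ 0) : rp (utd u t) x = - (lapR (ip (u t)) x
      - (a / ‖x‖ ^ 2 + ‖x‖ ^ (-b) * (rp (u t) x ^ 2 + ip (u t) x ^ 2)) * ip (u t) x) := by
  have h := congrArg Complex.im (hu.eqn t x hx)
  rw [lap_ip (smooth_of_S (hu.schwartz t))]
  rw [norm_sq_ri] at h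
  simp only [Complex.add_im, Complex.sub_im, Complex.mul_re, Complex.I_re, Complex.I_im,
    Complex.ofReal_re, Complex.ofReal_im, Complex.mul_im] at h
  simp only [rp, ip, utd]
  linear_combination h

/-- `∂ₜ` at fixed `x`. -/
lemma hasDerivAt_u {u : ℝ → E3 → ℂ} (hu : ContDiff ℝ (⊤ : ℕ∞) (Function.uncurry u)) (t : ℝ)
    (x : E3) : HasDerivAt (fun s => u s x) (fderiv ℝ (Function.uncurry u) (t, x) (1, 0)) t := by
  have h := (hu.differentiable (by simp) (t, x)).hasFDerivAt
  have h2 : HasDerivAt (fun s : ℝ => (s, x)) ((1 : ℝ), (0 : E3)) t :=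
    (hasDerivAt_id t).prodMk (hasDerivAt_const t x)
  exact h.comp_hasDerivAt t h2

lemma hasFDerivAt_slice {F : ℝ × E3 → ℂ} (t : ℝ) (x : E3) (h : DifferentiableAt ℝ F (t, x)) :
    HasFDerivAt (fun y => F (t, y)) ((fderiv ℝ F (t, x)).comp (ContinuousLinearMap.inr ℝ ℝ E3)) x :=
  h.hasFDerivAt.comp x (hasFDerivAt_prodMk_right t x)

lemma pd_slice {F : ℝ × E3 → ℂ} (t : ℝ) (x : E3) (j : Fin 3) (h : DifferentiableAt ℝ F (t, x)) :
    pd j (fun y => F (t, y)) x = fderiv ℝ F (t, x) (0, e3 j) := by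
  rw [pd, (hasFDerivAt_slice t x h).fderiv]; rfl

lemma hasDerivAt_pd {u : ℝ → E3 → ℂ} (hu : ContDiff ℝ (⊤ : ℕ∞) (Function.uncurry u)) (t : ℝ)
    (x : E3) (j : Fin 3) : HasDerivAt (fun s => pd j (u s) x) (pd j (utd u t) x) t := by
  set U := Function.uncurry u with hU
  have hd : Differentiable ℝ U := hu.differentiable (by simp)
  have hd2 : Differentiable ℝ (fderiv ℝ U) :=
    (hu.fderiv_right (m := 1) (WithTop.coe_le_coe.mpr le_top)).differentiable (by simp)
  have hs : IsSymmSndFDerivAt ℝ U (t, x) :=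
    ((hu.of_le (WithTop.coe_le_coe.mpr le_top) : ContDiff ℝ 2 U).contDiffAt).isSymmSndFDerivAt
      (by simp)
  have e1 : (fun s => pd j (u s) x) = fun s => fderiv ℝ U (s, x) (0, e3 j) :=
    funext fun s => pd_slice s x j (hd _)
  have e2 : utd u t = fun y => (fun z => fderiv ℝ U z (1, 0)) (t, y) :=
    funext fun y => (hasDerivAt_u hu t y).deriv
  have hL : ∀ v : ℝ × E3, HasFDerivAt (fun z => fderiv ℝ U z v)
      ((ContinuousLinearMap.apply ℝ ℂ v).comp (fderiv ℝ (fderiv ℝ U) (t, x))) (t, x) := fun v =>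
    (ContinuousLinearMap.apply ℝ ℂ v).hasFDerivAt.comp (t, x) (hd2 (t, x)).hasFDerivAt
  have e3' : pd j (utd u t) x = fderiv ℝ (fderiv ℝ U) (t, x) (1, 0) (0, e3 j) := by
    rw [e2, pd_slice t x j (hL _).differentiableAt, (hL _).fderiv]
    exact (hs.eq _ _)
  rw [e1, e3']
  have h2 : HasDerivAt (fun s : ℝ => (s, x)) ((1 : ℝ), (0 : E3)) t :=
    (hasDerivAt_id t).prodMk (hasDerivAt_const t x)
  exact (hL (0, e3 j)).comp_hasDerivAt t h2

lemma HasDerivAt.re' {f : ℝ → ℂ} {f' : ℂ} {t : ℝ} (h : HasDerivAt f f' t) :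
    HasDerivAt (fun s => (f s).re) f'.re t :=
  Complex.reCLM.hasFDerivAt.comp_hasDerivAt t h

lemma HasDerivAt.im' {f : ℝ → ℂ} {f' : ℂ} {t : ℝ} (h : HasDerivAt f f' t) :
    HasDerivAt (fun s => (f s).im) f'.im t :=
  Complex.imCLM.hasFDerivAt.comp_hasDerivAt t h

section
variable {a b : ℝ} {u : ℝ → E3 → ℂ}

lemma sol_diff (hu : IsSchwartzSolution a b 1 u) (t : ℝ) : Differentiable ℝ (u t) :=
  (smooth_of_S (hu.schwartz t)).differentiable (by simp)

lemma sol_diff' (hu : IsSchwartzSolution a b 1 u) (t : ℝ) : Differentiable ℝ (utd u t) :=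
  (smooth_of_S (hu.schwartz_dt t)).differentiable (by simp)

lemma dt_rp (hu : IsSchwartzSolution a b 1 u) (t : ℝ) (x : E3) :
    HasDerivAt (fun s => rp (u s) x) (rp (utd u t) x) t :=
  (hasDerivAt_u hu.smooth t x).differentiableAt.hasDerivAt.re'

lemma dt_ip (hu : IsSchwartzSolution a b 1 u) (t : ℝ) (x : E3) :
    HasDerivAt (fun s => ip (u s) x) (ip (utd u t) x) t :=
  (hasDerivAt_u hu.smooth t x).differentiableAt.hasDerivAt.im'

lemma dt_pd_rp (hu : IsSchwartzSolution a b 1 u) (t : ℝ) (x : E3) (j : Fin 3) :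
    HasDerivAt (fun s => pdR j (rp (u s)) x) (pdR j (rp (utd u t)) x) t := by
  have e : (fun s => pdR j (rp (u s)) x) = fun s => (pd j (u s) x).re :=
    funext fun s => pdR_rp j x (sol_diff hu s x)
  rw [e, pdR_rp j x (sol_diff' hu t x)]
  exact (hasDerivAt_pd hu.smooth t x j).re'

lemma dt_pd_ip (hu : IsSchwartzSolution a b 1 u) (t : ℝ) (x : E3) (j : Fin 3) :
    HasDerivAt (fun s => pdR j (ip (u s)) x) (pdR j (ip (utd u t)) x) t := by
  have e : (fun s => pdR j (ip (u s)) x) = fun s => (pd j (u s) x).im :=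
    funext fun s => pdR_ip j x (sol_diff hu s x)
  rw [e, pdR_ip j x (sol_diff' hu t x)]
  exact (hasDerivAt_pd hu.smooth t x j).im'

/-- Morawetz density. -/
def mdens (s : ℝ) (u : ℝ → E3 → ℂ) (t : ℝ) (x : E3) : ℝ :=
  rp (u t) x * Xd s (ip (u t)) x - ip (u t) x * Xd s (rp (u t)) x

lemma dt_mdens (hu : IsSchwartzSolution a b 1 u) (s t : ℝ) (x : E3) :
    HasDerivAt (fun t => mdens s u t x)
      (Idens s (rp (u t)) (ip (u t)) (rp (utd u t)) (ip (utd u t)) x) t := by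
  have h1 : HasDerivAt (fun t => Xd s (ip (u t)) x) (Xd s (ip (utd u t)) x) t :=
    (((dt_pd_ip hu t x 0).const_mul _).add ((dt_pd_ip hu t x 1).const_mul _)).add
      ((dt_pd_ip hu t x 2).const_mul _)
  have h2 : HasDerivAt (fun t => Xd s (rp (u t)) x) (Xd s (rp (utd u t)) x) t :=
    (((dt_pd_rp hu t x 0).const_mul _).add ((dt_pd_rp hu t x 1).const_mul _)).add
      ((dt_pd_rp hu t x 2).const_mul _)
  have h3 := ((dt_rp hu t x).mul h1).sub ((dt_ip hu t x).mul h2)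
  refine h3.congr_deriv ?_
  unfold Idens
  ring

lemma abs_Xf (s : ℝ) (hs : 0 < s) (j : Fin 3) (x : E3) : |Xf s j x| ≤ 1 / s := by
  have h := rho_sq s x
  have hc := abs_coord_le x j
  have h0 := rho_pos s x
  rw [Xf, abs_mul, abs_of_pos h0, le_div_iff₀ hs]
  have h1 : rho s x * |x j| * s ≤ rho s x * ‖x‖ * s := by gcongr
  refine h1.trans ?_
  have h2 : (rho s x * ‖x‖ * s) ^ 2 ≤ 1 := by
    have : 0 < rho s x ^ 2 := by positivity
    nlinarith
  nlinarith [sq_nonneg (rho s x * ‖x‖ * s - 1)]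
end

lemma norm_e3 (j : Fin 3) : ‖e3 j‖ = 1 := by
  simp [e3]

lemma pd_norm_le (f : E3 → ℂ) (j : Fin 3) (x : E3) : ‖pd j f x‖ ≤ ‖fderiv ℝ f x‖ := by
  have := (fderiv ℝ f x).le_opNorm (e3 j)
  rwa [norm_e3, mul_one] at this

lemma unif {a b : ℝ} {u : ℝ → E3 → ℂ} (hu : IsSchwartzSolution a b 1 u) (T : ℝ) (hT : 0 < T) :
    ∃ C, 0 ≤ C ∧ ∀ t ∈ Set.Icc (-T) T, ∀ x,
      (1 + ‖x‖) ^ 4 * ‖u t x‖ ≤ C ∧ (1 + ‖x‖) ^ 4 * ‖utd u t x‖ ≤ C ∧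
      (∀ j, ‖pd j (u t) x‖ ≤ C) ∧ ∀ j, ‖pd j (utd u t) x‖ ≤ C := by
  obtain ⟨A, hA⟩ := hu.unif_bound 0 0 T hT
  obtain ⟨B, hB⟩ := hu.unif_bound 4 0 T hT
  obtain ⟨D, hD⟩ := hu.unif_bound 0 1 T hT
  simp only [norm_iteratedFDeriv_zero, norm_iteratedFDeriv_one, pow_zero, one_mul] at hA hB hD
  have h0 : (0 : ℝ) ∈ Set.Icc (-T) T := ⟨by linarith, hT.le⟩
  have A0 : 0 ≤ A := le_trans (by positivity) (hA 0 h0 0)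
  have B0 : 0 ≤ B := le_trans (by positivity) (hB 0 h0 0)
  have D0 : 0 ≤ D := le_trans (by positivity) (hD 0 h0 0)
  have key : ∀ r z : ℝ, 0 ≤ r → 0 ≤ z → z ≤ A → r ^ 4 * z ≤ B → (1 + r) ^ 4 * z ≤ 8 * (A + B) + D := by
    intro r z hr hz h1 h2
    have h3 : (1 + r) ^ 4 ≤ 8 * (1 + r ^ 4) := by
      nlinarith [sq_nonneg (r - 1), sq_nonneg (r ^ 2 - 1), sq_nonneg (r ^ 2 - r), sq_nonneg (r ^ 2 - 2 * r + 1)]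
    calc (1 + r) ^ 4 * z ≤ 8 * (1 + r ^ 4) * z := by gcongr
      _ = 8 * (z + r ^ 4 * z) := by ring
      _ ≤ _ := by linarith
  refine ⟨8 * (A + B) + D, by positivity, fun t ht x => ⟨?_, ?_, fun j => ?_, fun j => ?_⟩⟩
  · refine key _ _ (norm_nonneg _) (norm_nonneg _) ?_ ?_
    · have := hA t ht x
      exact le_trans (le_add_of_nonneg_right (norm_nonneg _)) this
    · have := hB t ht x
      exact le_trans (le_add_of_nonneg_right (by positivity)) this
  · refine key _ _ (norm_nonneg _) (norm_nonneg _) ?_ ?_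
    · have := hA t ht x
      exact le_trans (le_add_of_nonneg_left (norm_nonneg _)) this
    · have := hB t ht x
      exact le_trans (le_add_of_nonneg_left (by positivity)) this
  · have := hD t ht x
    have h2 := pd_norm_le (u t) j x
    have h3 := norm_nonneg (fderiv ℝ (fun y => deriv (fun s => u s y) t) x)
    linarith
  · have := hD t ht x
    have h2 : ‖pd j (utd u t) x‖ ≤ ‖fderiv ℝ (fun y => deriv (fun s => u s y) t) x‖ :=
      pd_norm_le (utd u t) j x
    have h3 := norm_nonneg (fderiv ℝ (u t) x)
    linarith

lemma abs_Xd (s : ℝ) (hs : 0 < s) (h : E3 → ℝ) (x : E3) (C : ℝ) (hC : ∀ j, |pdR j h x| ≤ C) :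
    |Xd s h x| ≤ 3 * (1 / s * C) := by
  have hj : ∀ j, |Xf s j x * pdR j h x| ≤ 1 / s * C := fun j => by
    rw [abs_mul]
    exact mul_le_mul (abs_Xf s hs j x) (hC j) (abs_nonneg _) (by positivity)
  unfold Xd
  have h1 := abs_add_le (Xf s 0 x * pdR 0 h x + Xf s 1 x * pdR 1 h x) (Xf s 2 x * pdR 2 h x)
  have h2 := abs_add_le (Xf s 0 x * pdR 0 h x) (Xf s 1 x * pdR 1 h x)
  linarith [hj 0, hj 1, hj 2]

/-- The Morawetz action. -/
def mact (s : ℝ) (u : ℝ → E3 → ℂ) (t : ℝ) : ℝ := ∫ x, mdens s u t x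

section
variable {a b : ℝ} {u : ℝ → E3 → ℂ}

lemma mdens_S (hu : IsSchwartzSolution a b 1 u) (s t : ℝ) : IsS (mdens s u t) :=
  ((isS_rp (hu.schwartz t)).mul ((isS_ip (hu.schwartz t)).Xd s)).sub
    ((isS_ip (hu.schwartz t)).mul ((isS_rp (hu.schwartz t)).Xd s))

lemma Idens_S {p q gr gi : E3 → ℝ} (hp : IsS p) (hq : IsS q) (hgr : IsS gr) (hgi : IsS gi)
    (s : ℝ) : IsS (Idens s p q gr gi) :=
  (((hgr.mul (hq.Xd s)).sub (hgi.mul (hp.Xd s))).add (hp.mul (hgi.Xd s))).sub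
      (hq.mul (hgr.Xd s))

lemma dt_mact (hu : IsSchwartzSolution a b 1 u) (s : ℝ) (hs : 0 < s) (t : ℝ) :
    HasDerivAt (mact s u)
      (∫ x, Idens s (rp (u t)) (ip (u t)) (rp (utd u t)) (ip (utd u t)) x) t := by
  obtain ⟨C, hC, hb⟩ := unif hu (|t| + 1) (by positivity)
  have hIntg : Integrable (fun x : E3 => (4 * C * (3 * (1 / s * C))) * (1 + ‖x‖) ^ (-(4 : ℝ))) :=
    (integrable_one_add_norm (by simp; norm_num)).const_mul _
  refine (hasDerivAt_integral_of_dominated_loc_of_deriv_le (F := fun t x => mdens s u t x)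
    (F' := fun t x => Idens s (rp (u t)) (ip (u t)) (rp (utd u t)) (ip (utd u t)) x)
    (s := Set.Icc (-(|t| + 1)) (|t| + 1)) (x₀ := t) ?_ ?_ ?_ ?_ ?_ hIntg ?_).2
  · refine Icc_mem_nhds ?_ ?_
    · have := neg_abs_le t; linarith
    · have := le_abs_self t; linarith
  · exact Eventually.of_forall fun t => (mdens_S hu s t).integrable.aestronglyMeasurable
  · exact (mdens_S hu s t).integrable
  · exact (Idens_S (isS_rp (hu.schwartz t)) (isS_ip (hu.schwartz t)) (isS_rp (hu.schwartz_dt t))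
      (isS_ip (hu.schwartz_dt t)) s).integrable.aestronglyMeasurable
  · refine Eventually.of_forall fun x τ hτ => ?_
    obtain ⟨b1, b2, b3, b4⟩ := hb τ hτ x
    have hp : (0 : ℝ) < (1 + ‖x‖) ^ 4 := by positivity
    have e : (1 + ‖x‖) ^ (-(4 : ℝ)) = ((1 + ‖x‖) ^ 4)⁻¹ := by
      rw [Real.rpow_neg (by positivity), ← Real.rpow_natCast]; norm_num
    rw [e]
    rw [mul_comm, ← le_div_iff₀ hp, div_eq_mul_inv] at b1 b2
    set r := ((1 + ‖x‖) ^ 4)⁻¹ with hr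
    have hr0 : 0 ≤ r := by positivity
    have x1 : |Xd s (rp (u τ)) x| ≤ 3 * (1 / s * C) := abs_Xd s hs _ x C fun j => by
      rw [pdR_rp j x (sol_diff hu τ x)]; exact (Complex.abs_re_le_norm _).trans (b3 j)
    have x2 : |Xd s (ip (u τ)) x| ≤ 3 * (1 / s * C) := abs_Xd s hs _ x C fun j => by
      rw [pdR_ip j x (sol_diff hu τ x)]; exact (Complex.abs_im_le_norm _).trans (b3 j)
    have x3 : |Xd s (rp (utd u τ)) x| ≤ 3 * (1 / s * C) := abs_Xd s hs _ x C fun j => by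
      rw [pdR_rp j x (sol_diff' hu τ x)]; exact (Complex.abs_re_le_norm _).trans (b4 j)
    have x4 : |Xd s (ip (utd u τ)) x| ≤ 3 * (1 / s * C) := abs_Xd s hs _ x C fun j => by
      rw [pdR_ip j x (sol_diff' hu τ x)]; exact (Complex.abs_im_le_norm _).trans (b4 j)
    have y1 : |rp (u τ) x| ≤ C * r := (Complex.abs_re_le_norm _).trans b1
    have y2 : |ip (u τ) x| ≤ C * r := (Complex.abs_im_le_norm _).trans b1
    have y3 : |rp (utd u τ) x| ≤ C * r := (Complex.abs_re_le_norm _).trans b2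
    have y4 : |ip (utd u τ) x| ≤ C * r := (Complex.abs_im_le_norm _).trans b2
    set Z := 3 * (1 / s * C) with hZ
    have hm : ∀ y z : ℝ, |y| ≤ C * r → |z| ≤ Z → |y * z| ≤ C * r * Z := fun y z hy hz => by
      rw [abs_mul]
      exact mul_le_mul hy hz (abs_nonneg _) (by positivity)
    rw [Real.norm_eq_abs, Idens]
    have m1 := abs_le.mp (hm _ _ y3 x2)
    have m2 := abs_le.mp (hm _ _ y4 x1)
    have m3 := abs_le.mp (hm _ _ y1 x4)
    have m4 := abs_le.mp (hm _ _ y2 x3)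
    rw [abs_le]
    constructor <;> linarith [m1.1, m1.2, m2.1, m2.2, m3.1, m3.2, m4.1, m4.2]
  · exact Eventually.of_forall fun x τ _ => dt_mdens hu s τ x

lemma energy_eq (hu : IsSchwartzSolution a b 1 u) (t : ℝ) (x : E3) :
    ‖u t x‖ ^ 2 + ∑ j : Fin 3, ‖pd j (u t) x‖ ^ 2 =
      rp (u t) x ^ 2 + ip (u t) x ^ 2 + (gsq (rp (u t)) x + gsq (ip (u t)) x) := by
  have hd := sol_diff hu t x
  rw [Fin.sum_univ_three, norm_sq_ri, norm_sq_ri, norm_sq_ri, norm_sq_ri]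
  unfold gsq
  rw [pdR_rp 0 x hd, pdR_rp 1 x hd, pdR_rp 2 x hd, pdR_ip 0 x hd, pdR_ip 1 x hd, pdR_ip 2 x hd]
  simp only [rp, ip]
  ring

lemma abs_mdens (s : ℝ) (hs : 0 < s) (t : ℝ) (x : E3) :
    |mdens s u t x| ≤ 3 / 2 * (1 / s) *
      (rp (u t) x ^ 2 + ip (u t) x ^ 2 + (gsq (rp (u t)) x + gsq (ip (u t)) x)) := by
  have hm : ∀ (j : Fin 3) (y z : ℝ), |y * (Xf s j x * z)| ≤ 1 / s * ((y ^ 2 + z * z) / 2) := by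
    intro j y z
    have e : |y * (Xf s j x * z)| = |Xf s j x| * |y * z| := by
      rw [← abs_mul]; congr 1; ring
    rw [e]
    refine mul_le_mul (abs_Xf s hs j x) ?_ (abs_nonneg _) (by positivity)
    rw [abs_le]
    constructor <;> nlinarith [sq_nonneg (y + z), sq_nonneg (y - z)]
  have g1 := gsq_nonneg (rp (u t)) x
  have g2 := gsq_nonneg (ip (u t)) x
  have hs' : 0 ≤ 1 / s := by positivity
  have g3 := mul_nonneg hs' (add_nonneg g1 g2)
  unfold mdens Xd
  unfold gsq at g3 ⊢
  have a0 := abs_le.mp (hm 0 (rp (u t) x) (pdR 0 (ip (u t)) x))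
  have a1 := abs_le.mp (hm 1 (rp (u t) x) (pdR 1 (ip (u t)) x))
  have a2 := abs_le.mp (hm 2 (rp (u t) x) (pdR 2 (ip (u t)) x))
  have b0 := abs_le.mp (hm 0 (ip (u t) x) (pdR 0 (rp (u t)) x))
  have b1 := abs_le.mp (hm 1 (ip (u t) x) (pdR 1 (rp (u t)) x))
  have b2 := abs_le.mp (hm 2 (ip (u t) x) (pdR 2 (rp (u t)) x))
  rw [abs_le]
  constructor <;> linarith [a0.1, a0.2, a1.1, a1.2, a2.1, a2.2, b0.1, b0.2, b1.1, b1.2, b2.1, b2.2]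

lemma abs_mact (hu : IsSchwartzSolution a b 1 u) (s : ℝ) (hs : 0 < s) (E t : ℝ)
    (hbd : ∫ x : E3, (‖u t x‖ ^ 2 + ∑ j : Fin 3, ‖pd j (u t) x‖ ^ 2) ≤ E ^ 2) :
    |mact s u t| ≤ 3 / 2 * (1 / s) * E ^ 2 := by
  have hp := isS_rp (hu.schwartz t)
  have hq := isS_ip (hu.schwartz t)
  have hE : Integrable (fun x => rp (u t) x ^ 2 + ip (u t) x ^ 2
      + (gsq (rp (u t)) x + gsq (ip (u t)) x)) := by
    have := (((hp.mul hp).add (hq.mul hq)).add (hp.gsq.add hq.gsq)).integrable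
    refine this.congr (Eventually.of_forall fun x => ?_)
    simp only [sq]
  simp only [energy_eq hu] at hbd
  calc |mact s u t| ≤ ∫ x, |mdens s u t x| := abs_integral_le_integral_abs
    _ ≤ ∫ x, 3 / 2 * (1 / s) * (rp (u t) x ^ 2 + ip (u t) x ^ 2
          + (gsq (rp (u t)) x + gsq (ip (u t)) x)) :=
        integral_mono (mdens_S hu s t).integrable.abs (hE.const_mul _) fun x => abs_mdens s hs t x
    _ = 3 / 2 * (1 / s) * ∫ x, (rp (u t) x ^ 2 + ip (u t) x ^ 2
          + (gsq (rp (u t)) x + gsq (ip (u t)) x)) := integral_const_mul _ _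
    _ ≤ _ := by gcongr

lemma M2_eq (b t : ℝ) (x : E3) : M2 b (rp (u t)) (ip (u t)) x = ‖u t x‖ ^ 4 * ‖x‖ ^ (-b) := by
  have h : ‖u t x‖ ^ 4 = (‖u t x‖ ^ 2) ^ 2 := by ring
  rw [M2, pow_norm_eq, h, norm_sq_ri]
  simp only [rp, ip]
  ring

lemma exists_time (ha : -(1/4 : ℝ) < a) (hb0 : 0 < b) (hb1 : b < 1)
    (hu : IsSchwartzSolution a b 1 u) (E : ℝ) (hE : 0 < E)
    (hbd : ∀ t : ℝ, ∫ x : E3, (‖u t x‖ ^ 2 + ∑ j : Fin 3, ‖pd j (u t) x‖ ^ 2) ≤ E ^ 2)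
    (t₀ R : ℝ) (hR : 1 ≤ R) :
    ∃ t, t₀ ≤ t ∧ ∫ x in Metric.closedBall (0 : E3) R, ‖u t x‖ ^ 4 * ‖x‖ ^ (-b) ≤ 13 * E ^ 2 / R := by
  by_contra hcon
  push Not at hcon
  have hR0 : 0 < R := by linarith
  have hs : 0 < 1 / R := by positivity
  have hs1 : 1 / R ≤ 1 := by rw [div_le_one hR0]; exact hR
  have hder : ∀ t, t₀ ≤ t → 1 / 2 * (E ^ 2 / R) ≤ deriv (mact (1 / R) u) t := by
    intro t ht
    rw [(dt_mact hu (1 / R) hs t).deriv]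
    have h := key_ineq (isS_rp (hu.schwartz t)) (isS_ip (hu.schwartz t))
      (isS_rp (hu.schwartz_dt t)) (isS_ip (hu.schwartz_dt t)) a b (1 / R) ha hb0 hb1 hs hs1
      (eqn_gr hu t) (eqn_gi hu t)
    rw [one_div_one_div] at h
    simp only [M2_eq] at h
    simp only [← energy_eq hu] at h
    refine le_trans ?_ h
    have h1 := (hcon t ht).le
    have h2 := mul_le_mul_of_nonneg_left (hbd t) (by positivity : 0 ≤ 6 * (1 / R))
    have e1 : 13 * E ^ 2 / R = 13 * (E ^ 2 / R) := by ring
    have e2 : 6 * (1 / R) * E ^ 2 = 6 * (E ^ 2 / R) := by ring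
    rw [e1] at h1
    rw [e2] at h2
    linarith
  have hdiff : Differentiable ℝ (mact (1 / R) u) := fun t =>
    (dt_mact hu (1 / R) hs t).differentiableAt
  set c := 1 / 2 * (E ^ 2 / R) with hc
  have hc0 : 0 < c := by positivity
  set B := 3 / 2 * (1 / (1 / R)) * E ^ 2 with hB
  have hB0 : 0 < B := by positivity
  have hB' : ∀ t, |mact (1 / R) u t| ≤ B := fun t => abs_mact hu (1 / R) hs E t (hbd t)
  have hmv := (convex_Ici t₀).mul_sub_le_image_sub_of_le_deriv hdiff.continuous.continuousOn
    hdiff.differentiableOn (C := c) (fun t ht => hder t (interior_subset ht)) t₀ Set.self_mem_Ici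
    (t₀ + (2 * B + 1) / c) (by simp only [Set.mem_Ici]; linarith [show 0 ≤ (2 * B + 1) / c by positivity])
    (by linarith [show 0 ≤ (2 * B + 1) / c by positivity])
  have e : c * (t₀ + (2 * B + 1) / c - t₀) = 2 * B + 1 := by field_simp; ring
  rw [e] at hmv
  have h1 := abs_le.mp (hB' t₀)
  have h2 := abs_le.mp (hB' (t₀ + (2 * B + 1) / c))
  linarith [h1.1, h2.2]
end

/-- **Potential energy decay along a sequence of times (defocusing case
`λ = 1`).** For a uniformly `H¹`-bounded smooth Schwartz solution there are
sequences `t_n → ∞` and `R_n → ∞` with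
`∫_{|x| ≤ R_n} |u(t_n,x)|⁴/|x|^b dx → 0`. -/
theorem potential_energy_decay (a b : ℝ) (ha : -(1/4 : ℝ) < a)
    (hb0 : 0 < b) (hb1 : b < 1)
    (u : ℝ → E3 → ℂ) (hu : IsSchwartzSolution a b 1 u)
    (E : ℝ) (hE : 0 < E)
    (hbd : ∀ t : ℝ, ∫ x : E3,
        (‖u t x‖ ^ 2 + ∑ j : Fin 3, ‖pd j (u t) x‖ ^ 2) ≤ E ^ 2) :
    ∃ tn Rn : ℕ → ℝ, Tendsto tn atTop atTop ∧ Tendsto Rn atTop atTop ∧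
      Tendsto (fun n => ∫ x in Metric.closedBall (0 : E3) (Rn n),
          ‖u (tn n) x‖ ^ 4 * ‖x‖ ^ (-b)) atTop (nhds 0) := by
  choose tn htn hP using fun n : ℕ => exists_time ha hb0 hb1 hu E hE hbd (n : ℝ) ((n : ℝ) + 1)
    (by linarith [(Nat.cast_nonneg n : (0 : ℝ) ≤ n)])
  have hN : Tendsto (fun n : ℕ => (n : ℝ) + 1) atTop atTop :=
    tendsto_atTop_add_const_right _ _ tendsto_natCast_atTop_atTop
  refine ⟨tn, fun n => (n : ℝ) + 1, tendsto_atTop_mono htn tendsto_natCast_atTop_atTop, hN, ?_⟩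
  refine squeeze_zero (fun n => ?_) hP (hN.const_div_atTop _)
  exact integral_nonneg fun x => by positivity
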